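/- arXiv:1511.04333 — 4 statements merged into one kernel-verified Lean document; each statement's English description precedes it below -/
import Mathlib

section
/- Let K be a field whose characteristic is 0 or a prime p ≠ 3, and let 𝔞 be a finite-dimensional Lie algebra over K such that the base change K̄ ⊗_K 𝔞 to the algebraic closure K̄ of K is isomorphic, as a Lie algebra over K̄, to sl_3(K̄). Then for any two K-subspaces U and V of 𝔞 one has dim_K [U,V] ≥ dim_K U + dim_K V − 8; equivalently, codim [U,V] ≤ codim U + codim V. -/
/-!
The base change to the algebraic closure `F` of `K` preserves dimensions of subspaces, and the bracket
of two base changes lies in the base change of `bracketSpan U V`. It therefore suffices to bound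
dimensions of subspaces `U`, `V`, `S` of traceless `3 × 3` matrices over `F` with `[U, V] ⊆ S`.

**Symmetric form.** The trace pairing on all matrices is nondegenerate. Let `W = S^⊥`, of dimension
`9 - dim S`, and enlarge `U` and `V` by the scalar matrices, which raises each dimension by one because
`3 ≠ 0`. The trilinear form `tr ([u, v] w)`, alternating and invariant under cyclic permutations,
vanishes on `U × V × W`, and the claim becomes `dim U + dim V + dim W ≤ 19` (`matrix_bound`).

**Centralizers.** For a fixed `x ∈ U` the space `W` is orthogonal to `[x, V]`, so
`dim V + dim W ≤ 9 + dim C(x)`, where `C(x)` is the centralizer (`add_le_cent`). It has dimension at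
most `6` if `x` is not scalar, and at most `3` if `x` has a cyclic vector. If the three dimensions add
up to `20` or more, the first bound gives `dim U ≥ 5`. A subspace of dimension at least `5` contains a
matrix with a cyclic vector (`exists_cyclic`), so the second bound gives `dim V + dim W ≤ 12`. By
symmetry the same holds for the other two pairs, so the total is at most `18`, a contradiction.

**Matrices without cyclic vector.** Such a matrix is a scalar plus a matrix of rank at most one
(`exists_scalar_add_rank_one`). If every element of `U` has this form, then the rank-one parts of any
two elements share their column or their row up to a scalar (`pair_dep`). Hence all rank-one parts share
the same column or all share the same row, and `dim U ≤ 1 + 3` (`finrank_le_four`).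
-/

open scoped TensorProduct

/-- The span of all brackets `⁅u, v⁆` with `u ∈ U`, `v ∈ V`. -/
def bracketSpan {K L : Type*} [Field K] [LieRing L] [LieAlgebra K L]
    (U V : Submodule K L) : Submodule K L :=
  Submodule.span K {z | ∃ u ∈ U, ∃ v ∈ V, ⁅u, v⁆ = z}

namespace SL3

section

open Matrix

/-- The `3 × 3` matrices over `K`. -/
abbrev M3 (K : Type*) := Matrix (Fin 3) (Fin 3) K
variable {K : Type*} [Field K]

/-! ### Cyclic vectors and centralizers -/

theorem exists_third {φ ψ : Fin 3 → K} (h : LinearIndependent K ![φ, ψ]) :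
    ∃ w : Fin 3 → K, (of ![φ, ψ, w]).det ≠ 0 := by
  rw [← crossProduct_ne_zero_iff_linearIndependent] at h
  obtain ⟨i, hi⟩ := Function.ne_iff.1 h
  refine ⟨Pi.single i 1, ?_⟩
  intro h0
  apply hi
  refine Eq.trans ?_ h0
  fin_cases i <;> simp [det_fin_three, cross_apply]
  ring

theorem eq_zero_of_mulVec {y : M3 K} {a b c : Fin 3 → K}
    (h : (of ![a, b, c]).det ≠ 0) (ha : y *ᵥ a = 0) (hb : y *ᵥ b = 0) (hc : y *ᵥ c = 0) :
    y = 0 := by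
  have h1 : y * (of ![a, b, c])ᵀ = 0 := by
    ext i j
    fin_cases j
    · exact congrFun ha i
    · exact congrFun hb i
    · exact congrFun hc i
  have h2 : IsUnit (of ![a, b, c])ᵀ := by
    rw [isUnit_iff_isUnit_det, det_transpose]; exact h.isUnit
  exact h2.mul_left_eq_zero.1 h1

/-- The centralizer of `x` in the algebra of all `3 × 3` matrices. -/
def cent (x : M3 K) : Submodule K (M3 K) :=
  LinearMap.ker (LinearMap.mulLeft K x - LinearMap.mulRight K x)

theorem mem_cent {x y : M3 K} : y ∈ cent x ↔ x * y = y * x := by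
  simp [cent, sub_eq_zero]

/-- An element of the centralizer is determined by its value on a cyclic vector. -/
theorem finrank_cent_le_three {x : M3 K} {v : Fin 3 → K}
    (h : (of ![v, x *ᵥ v, x *ᵥ (x *ᵥ v)]).det ≠ 0) : Module.finrank K (cent x) ≤ 3 := by
  let f : cent x →ₗ[K] (Fin 3 → K) := ((mulVecBilin K K).flip v).comp (cent x).subtype
  have hf : Function.Injective f := by
    rw [← LinearMap.ker_eq_bot, LinearMap.ker_eq_bot']
    rintro ⟨y, hy⟩ h0
    rw [mem_cent] at hy
    have h0 : y *ᵥ v = 0 := h0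
    have h1 : y *ᵥ (x *ᵥ v) = 0 := by
      rw [mulVec_mulVec, ← hy, ← mulVec_mulVec, h0, mulVec_zero]
    have h2 : y *ᵥ (x *ᵥ (x *ᵥ v)) = 0 := by
      rw [mulVec_mulVec, ← hy, ← mulVec_mulVec, h1, mulVec_zero]
    exact Subtype.ext (eq_zero_of_mulVec h h0 h1 h2)
  simpa using LinearMap.finrank_le_finrank_of_injective hf

theorem exists_indep {x : M3 K} (hx : ∀ c : K, x ≠ c • 1) :
    ∃ v, LinearIndependent K ![v, x *ᵥ v] := by
  by_contra! h
  obtain ⟨c, hc⟩ := LinearMap.exists_eq_smul_id_of_forall_notLinearIndependent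
    (R := K) (f := toLin' x) (by simpa using h)
  apply hx c
  apply toLin'.injective
  simp [hc]
  rfl

/-- If `v`, `x v`, `w` is a basis, then an element of the centralizer of `x` is determined by its values
on `v` and `w`. -/
theorem finrank_cent_le_six {x : M3 K} (hx : ∀ c : K, x ≠ c • 1) :
    Module.finrank K (cent x) ≤ 6 := by
  obtain ⟨v, hv⟩ := exists_indep hx
  obtain ⟨w, hw⟩ := exists_third hv
  let f : cent x →ₗ[K] (Fin 3 → K) × (Fin 3 → K) :=
    (((mulVecBilin K K).flip v).prod ((mulVecBilin K K).flip w)).comp (cent x).subtype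
  have hf : Function.Injective f := by
    rw [← LinearMap.ker_eq_bot, LinearMap.ker_eq_bot']
    rintro ⟨y, hy⟩ h0
    rw [mem_cent] at hy
    have h2 : y *ᵥ w = 0 := congrArg Prod.snd h0
    have h0 : y *ᵥ v = 0 := congrArg Prod.fst h0
    have h1 : y *ᵥ (x *ᵥ v) = 0 := by
      rw [mulVec_mulVec, ← hy, ← mulVec_mulVec, h0, mulVec_zero]
    exact Subtype.ext (eq_zero_of_mulVec hw h0 h1 h2)
  simpa using LinearMap.finrank_le_finrank_of_injective hf

/-! ### Matrices without cyclic vector -/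

/-- The case of `exists_scalar_add_rank_one` in which the first two basis vectors are `v` and `x v`.
Dependence of `u, x u, x² u` is tested on the vectors `u = (1, 0, 0)` and `u = (s, t, 1)`. -/
theorem normal_form {a b c d e f : K} 
    (h : ∀ v, (of ![v, !![0, a, b; 1, c, d; 0, e, f] *ᵥ v,
      !![0, a, b; 1, c, d; 0, e, f] *ᵥ (!![0, a, b; 1, c, d; 0, e, f] *ᵥ v)]).det = 0) :
    !![0, a, b; 1, c, d; 0, e, f] = f • (1 : M3 K) + vecMulVec ![-f, 1, 0] ![1, c - f, d] := by
  have he : e = 0 := by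
    have := h ![1, 0, 0]
    simpa [det_fin_three, mulVec, dotProduct, Fin.sum_univ_three] using this
  subst he
  -- With `A = !![0, a; 1, c]`, `p = (s, t)` and `q = (b, d) + (A - f) p`, the determinant at
  -- `(s, t, 1)` is `det (q, A q)` up to sign.
  have key : ∀ s t : K,
      (b + (a * t - f * s)) ^ 2 + c * (b + (a * t - f * s)) * (d + (s + (c - f) * t))
        - a * (d + (s + (c - f) * t)) ^ 2 = 0 := by
    intro s t
    have := h ![s, t, 1]
    simp [det_fin_three, dotProduct, Fin.sum_univ_three] at this
    linear_combination this
  -- Otherwise `A - f` is invertible and `(s, t)` can be chosen with `q = (1, 0)`, where the form is `1`.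
  have ha : a = f ^ 2 - c * f := by
    by_contra hne
    have hD : f ^ 2 - c * f - a ≠ 0 := fun h0 => hne (by linear_combination -h0)
    have ht : (b + f * d - 1) / (f ^ 2 - c * f - a) * (f ^ 2 - c * f - a) = b + f * d - 1 :=
      div_mul_cancel₀ _ hD
    set t := (b + f * d - 1) / (f ^ 2 - c * f - a)
    have h1 := key (-d - (c - f) * t) t
    have h2 : b + (a * t - f * (-d - (c - f) * t)) = 1 := by linear_combination -ht
    have h3 : d + ((-d - (c - f) * t) + (c - f) * t) = 0 := by ring
    rw [h2, h3] at h1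
    simp at h1
  -- For this `a` the quadratic form factors, with `b + f * d` as a factor at every `(s, t)`.
  have hb : b = - f * d := by
    by_contra hne
    have hne : b + f * d ≠ 0 := fun h0 => hne (by linear_combination h0)
    have h0 : b + (c - f) * d = 0 := by
      have := key 0 0
      apply (mul_eq_zero.1 (_ : (b + f * d) * _ = 0)).resolve_left hne
      rw [ha] at this
      linear_combination this
    have h1 : c - 2 * f = 0 := by
      have := key 1 0
      rw [ha] at this
      apply (mul_eq_zero.1 (_ : (b + f * d) * _ = 0)).resolve_left hne
      linear_combination this - (b + f * d) * h0
    exact hne (by linear_combination h0 - h1 * d)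
  subst hb; subst ha
  ext i j
  fin_cases i <;> fin_cases j <;> simp
  ring

theorem exists_scalar_add_rank_one {x : M3 K}
    (h : ∀ v, (of ![v, x *ᵥ v, x *ᵥ (x *ᵥ v)]).det = 0) :
    ∃ (c : K) (a φ : Fin 3 → K), x = c • 1 + vecMulVec a φ := by
  by_cases hx : ∃ c : K, x = c • 1
  · obtain ⟨c, rfl⟩ := hx
    exact ⟨c, 0, 0, by simp⟩
  push Not at hx
  obtain ⟨v, hv⟩ := exists_indep hx
  obtain ⟨w, hw⟩ := exists_third hv
  set P : M3 K := (of ![v, x *ᵥ v, w])ᵀ with hP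
  have hPd : IsUnit P.det := by rw [hP, det_transpose]; exact hw.isUnit
  set N : M3 K := P⁻¹ * x * P with hN
  have hPN : x * P = P * N := by
    rw [hN, ← mul_assoc, ← mul_assoc, mul_nonsing_inv _ hPd, one_mul]
  have hxN : x = P * N * P⁻¹ := by
    rw [← hPN, mul_assoc, mul_nonsing_inv _ hPd, mul_one]
  have hcol : N *ᵥ ![1, 0, 0] = ![0, 1, 0] := by
    have h1 : P *ᵥ ![1, 0, 0] = v := by
      ext i; simp [hP, mulVec, dotProduct, Fin.sum_univ_three]
    have h2 : P *ᵥ ![0, 1, 0] = x *ᵥ v := by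
      ext i; simp [hP, mulVec, dotProduct, Fin.sum_univ_three]
    rw [hN, ← mulVec_mulVec, h1, ← mulVec_mulVec, ← h2, mulVec_mulVec, nonsing_inv_mul _ hPd,
      one_mulVec]
  have hform : N = !![0, N 0 1, N 0 2; 1, N 1 1, N 1 2; 0, N 2 1, N 2 2] := by
    have e0 := congrFun hcol 0
    have e1 := congrFun hcol 1
    have e2 := congrFun hcol 2
    simp [mulVec, dotProduct, Fin.sum_univ_three] at e0 e1 e2
    ext i j
    fin_cases i <;> fin_cases j <;> simp [e0, e1, e2]
  have hNC : ∀ u, (of ![u, N *ᵥ u, N *ᵥ (N *ᵥ u)]).det = 0 := by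
    intro u
    have h1 := h (P *ᵥ u)
    have h2 : x *ᵥ (P *ᵥ u) = P *ᵥ (N *ᵥ u) := by
      rw [mulVec_mulVec, hPN, ← mulVec_mulVec]
    have h3 : x *ᵥ (P *ᵥ (N *ᵥ u)) = P *ᵥ (N *ᵥ (N *ᵥ u)) := by
      rw [mulVec_mulVec, hPN, ← mulVec_mulVec]
    rw [h2, h3] at h1
    have h4 : of ![P *ᵥ u, P *ᵥ (N *ᵥ u), P *ᵥ (N *ᵥ (N *ᵥ u))]
        = of ![u, N *ᵥ u, N *ᵥ (N *ᵥ u)] * Pᵀ := by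
      ext i j
      fin_cases i
      · exact dotProduct_comm (P j) u
      · exact dotProduct_comm (P j) (N *ᵥ u)
      · exact dotProduct_comm (P j) (N *ᵥ (N *ᵥ u))
    rw [h4, det_mul, det_transpose] at h1
    exact (mul_eq_zero.1 h1).resolve_right hPd.ne_zero
  rw [hform] at hNC
  have := normal_form hNC
  rw [← hform] at this
  refine ⟨N 2 2, P *ᵥ ![-(N 2 2), 1, 0], ![1, N 1 1 - N 2 2, N 1 2] ᵥ* P⁻¹, ?_⟩
  conv_lhs => rw [hxN, this]
  rw [mul_add, add_mul, mul_vecMulVec, vecMulVec_mul, mul_smul_comm, smul_mul_assoc, mul_one,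
    mul_nonsing_inv _ hPd]

/-! ### Subspaces without cyclic elements -/

/-- In coordinates in which `φ` and `ψ` are the first two coordinate functionals, the matrix
`a φ + t b ψ` has zero third column. If subtracting `ν` leaves rank at most one, then `ν ≠ 0` since
`a, b` are independent, and the `2 × 2` minors force `a 0 = ν = t * b 1`. -/
theorem pair_aux {a b φ ψ c χ : Fin 3 → K} {t ν : K} (ht : t ≠ 0)
    (hab : LinearIndependent K ![a, b])
    (P : M3 K) (hP : IsUnit P.det) (h0 : φ ᵥ* P⁻¹ = ![1, 0, 0]) (h1 : ψ ᵥ* P⁻¹ = ![0, 1, 0])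
    (h : vecMulVec a φ + t • vecMulVec b ψ = ν • 1 + vecMulVec c χ) :
    (P *ᵥ a) 0 ≠ 0 ∧ (P *ᵥ a) 0 = t * (P *ᵥ b) 1 := by
  have hab' : LinearIndependent K ![P *ᵥ a, P *ᵥ b] := by
    rw [LinearIndependent.pair_iff] at hab ⊢
    intro s r hsr
    apply hab
    apply mulVec_injective_of_isUnit ((isUnit_iff_isUnit_det P).2 hP)
    simpa [mulVec_add, mulVec_smul] using hsr
  have key : vecMulVec (P *ᵥ a) ![1, 0, 0] + t • vecMulVec (P *ᵥ b) ![0, 1, 0]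
      = ν • 1 + vecMulVec (P *ᵥ c) (χ ᵥ* P⁻¹) := by
    have := congrArg (fun m => P * m * P⁻¹) h
    simp only [mul_add, add_mul, mul_vecMulVec, vecMulVec_mul, mul_smul_comm, smul_mul_assoc,
      mul_one, mul_nonsing_inv _ hP, h0, h1] at this
    exact this
  generalize P *ᵥ a = a' at *
  generalize P *ᵥ b = b' at *
  generalize P *ᵥ c = c' at *
  generalize χ ᵥ* P⁻¹ = χ' at *
  have k := fun i j => congrFun (congrFun key i) j
  have k00 := k 0 0
  have k01 := k 0 1
  have k02 := k 0 2
  have k10 := k 1 0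
  have k11 := k 1 1
  have k12 := k 1 2
  have k20 := k 2 0
  have k21 := k 2 1
  have k22 := k 2 2
  simp [vecMulVec_apply] at k00 k01 k02 k10 k11 k12 k20 k21 k22
  by_cases hν : ν = 0
  · exfalso
    rw [← crossProduct_ne_zero_iff_linearIndependent] at hab'
    apply hab'
    subst hν
    ext i
    apply mul_left_cancel₀ ht
    fin_cases i <;> simp [cross_apply] <;> grind
  · have e0 : a' 0 = ν := by
      apply mul_left_cancel₀ hν
      grind
    have e1 : t * b' 1 = ν := by
      apply mul_left_cancel₀ hν
      grind
    exact ⟨e0 ▸ hν, e0.trans e1.symm⟩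

/-- Two rank-one matrices with independent columns and independent rows span, modulo scalars, a matrix
that is not a scalar plus rank one: `pair_aux` cannot hold for two different nonzero parameters. -/
theorem pair_dep {a b φ ψ : Fin 3 → K} {t : K} (ht : t ≠ 0) (ht1 : t ≠ 1)
    (h : ∀ s : K, ∃ (ν : K) (c χ : Fin 3 → K),
      vecMulVec a φ + s • vecMulVec b ψ = ν • 1 + vecMulVec c χ)
    (hab : LinearIndependent K ![a, b]) (hφ : LinearIndependent K ![φ, ψ]) : False := by
  obtain ⟨w, hw⟩ := exists_third hφ
  set P : M3 K := of ![φ, ψ, w] with hP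
  have hPd : IsUnit P.det := hw.isUnit
  have h0 : φ ᵥ* P⁻¹ = ![1, 0, 0] := by
    have : φ = ![1, 0, 0] ᵥ* P := by
      ext i; simp [hP, vecMul, dotProduct, Fin.sum_univ_three]
    rw [this, vecMul_vecMul, mul_nonsing_inv _ hPd, vecMul_one]
  have h1 : ψ ᵥ* P⁻¹ = ![0, 1, 0] := by
    have : ψ = ![0, 1, 0] ᵥ* P := by
      ext i; simp [hP, vecMul, dotProduct, Fin.sum_univ_three]
    rw [this, vecMul_vecMul, mul_nonsing_inv _ hPd, vecMul_one]
  obtain ⟨ν, c, χ, e⟩ := h 1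
  obtain ⟨ν', c', χ', e'⟩ := h t
  obtain ⟨n1, q1⟩ := pair_aux one_ne_zero hab P hPd h0 h1 e
  obtain ⟨n2, q2⟩ := pair_aux ht hab P hPd h0 h1 e'
  rw [one_mul] at q1
  rw [q1] at n1 q2
  exact ht1 (mul_right_cancel₀ n1 (by rw [one_mul]; exact q2.symm))

theorem finrank_le_four_left {U : Submodule K (M3 K)} (a : Fin 3 → K)
    (h : ∀ x ∈ U, ∃ (c : K) (ψ : Fin 3 → K), x = c • 1 + vecMulVec a ψ) :
    Module.finrank K U ≤ 4 := by
  let f : K × (Fin 3 → K) →ₗ[K] M3 K :=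
    (LinearMap.toSpanSingleton K _ 1).coprod (vecMulVecBilin K K a)
  have hU : U ≤ LinearMap.range f := by
    intro x hx
    obtain ⟨c, ψ, rfl⟩ := h x hx
    exact ⟨(c, ψ), by simp [f]⟩
  refine (Submodule.finrank_mono hU).trans ((LinearMap.finrank_range_le f).trans ?_)
  simp

theorem finrank_le_four_right {U : Submodule K (M3 K)} (φ : Fin 3 → K)
    (h : ∀ x ∈ U, ∃ (c : K) (b : Fin 3 → K), x = c • 1 + vecMulVec b φ) :
    Module.finrank K U ≤ 4 := by
  let f : K × (Fin 3 → K) →ₗ[K] M3 K :=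
    (LinearMap.toSpanSingleton K _ 1).coprod ((vecMulVecBilin K K).flip φ)
  have hU : U ≤ LinearMap.range f := by
    intro x hx
    obtain ⟨c, ψ, rfl⟩ := h x hx
    exact ⟨(c, ψ), by simp [f]⟩
  refine (Submodule.finrank_mono hU).trans ((LinearMap.finrank_range_le f).trans ?_)
  simp

/-- A linear space of matrices of the form scalar plus rank at most one has dimension at most `4`. -/
theorem finrank_le_four [Infinite K] {U : Submodule K (M3 K)}
    (h : ∀ x ∈ U, ∃ (c : K) (a φ : Fin 3 → K), x = c • 1 + vecMulVec a φ) :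
    Module.finrank K U ≤ 4 := by
  classical
  obtain ⟨t, ht⟩ := Infinite.exists_notMem_finset ({0, 1} : Finset K)
  simp only [Finset.mem_insert, Finset.mem_singleton, not_or] at ht
  have pair : ∀ (c d : K) (a b φ ψ : Fin 3 → K), c • 1 + vecMulVec a φ ∈ U →
      d • 1 + vecMulVec b ψ ∈ U → a ≠ 0 → φ ≠ 0 → (∃ r : K, r • a = b) ∨ ∃ r : K, r • φ = ψ := by
    intro c d a b φ ψ hx hy ha hφ
    by_contra! hcon
    refine pair_dep ht.1 ht.2 (fun s => ?_) ((LinearIndependent.pair_iff' ha).2 hcon.1)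
      ((LinearIndependent.pair_iff' hφ).2 hcon.2)
    obtain ⟨ν, e, χ, he⟩ := h _ (U.add_mem hx (U.smul_mem s hy))
    refine ⟨ν - c - s * d, e, χ, ?_⟩
    rw [sub_smul, sub_smul, mul_smul]
    rw [smul_add] at he
    refine Eq.trans ?_ (congrArg (fun m => m - c • (1 : M3 K) - s • d • (1 : M3 K)) he) |>.trans ?_
    · abel
    · abel
  by_cases hs : ∀ x ∈ U, ∃ c : K, x = c • 1
  · refine finrank_le_four_left 0 fun x hx => ?_
    obtain ⟨c, rfl⟩ := hs x hx
    exact ⟨c, 0, by simp⟩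
  push Not at hs
  obtain ⟨x0, hx0, hs⟩ := hs
  obtain ⟨c0, a, φ, rfl⟩ := h x0 hx0
  have ha : a ≠ 0 := by rintro rfl; exact hs c0 (by simp)
  have hφ : φ ≠ 0 := by rintro rfl; exact hs c0 (by simp)
  by_cases hl : ∀ x ∈ U, ∃ (c : K) (ψ : Fin 3 → K), x = c • 1 + vecMulVec a ψ
  · exact finrank_le_four_left a hl
  by_cases hr : ∀ x ∈ U, ∃ (c : K) (b : Fin 3 → K), x = c • 1 + vecMulVec b φ
  · exact finrank_le_four_right φ hr
  -- Now `x1` is forced to share the row `φ` and `x2` the column `a`, and then the pair `x2, x1`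
  -- shares neither.
  exfalso
  push Not at hl hr
  obtain ⟨x1, hx1, hl⟩ := hl
  obtain ⟨x2, hx2, hr⟩ := hr
  obtain ⟨c1, b1, ψ1, rfl⟩ := h x1 hx1
  obtain ⟨c2, b2, ψ2, rfl⟩ := h x2 hx2
  rcases pair _ _ _ _ _ _ hx0 hx1 ha hφ with ⟨r, rfl⟩ | ⟨r, rfl⟩
  · exact hl c1 (r • ψ1) (by rw [smul_vecMulVec, vecMulVec_smul])
  rcases pair _ _ _ _ _ _ hx0 hx2 ha hφ with ⟨r', rfl⟩ | ⟨r', rfl⟩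
  swap
  · exact hr c2 (r' • b2) (by rw [smul_vecMulVec, vecMulVec_smul])
  rw [vecMulVec_smul, ← smul_vecMulVec] at hx1 hl
  rw [smul_vecMulVec, ← vecMulVec_smul] at hx2 hr
  rcases pair _ _ _ _ _ _ hx2 hx1 ha (fun h0 => hr c2 0 (by simp [h0]))
    with ⟨s, hs⟩ | ⟨s, hs⟩
  · exact hl c1 (s • φ) (by rw [← hs, smul_vecMulVec, vecMulVec_smul])
  · have hs0 : s ≠ 0 := by rintro rfl; exact hφ (by rw [← hs, zero_smul])
    refine hr c2 (s⁻¹ • a) ?_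
    rw [← hs, smul_vecMulVec, ← vecMulVec_smul, smul_smul s⁻¹ s, inv_mul_cancel₀ hs0, one_smul]

theorem exists_cyclic [Infinite K] {U : Submodule K (M3 K)} (hU : 5 ≤ Module.finrank K U) :
    ∃ x ∈ U, ∃ v, (of ![v, x *ᵥ v, x *ᵥ (x *ᵥ v)]).det ≠ 0 := by
  by_contra! h
  have := finrank_le_four fun x hx => exists_scalar_add_rank_one (h x hx)
  omega

/-! ### The trace pairing -/

/-- The trace pairing `x ↦ (y ↦ tr (x y))`, as an isomorphism with the dual space. -/
noncomputable def tracePairing (K : Type*) [Field K] : M3 K ≃ₗ[K] Module.Dual K (M3 K) :=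
  LinearMap.linearEquivOfInjective ((LinearMap.mul K (M3 K)).compr₂ (traceLinearMap (Fin 3) K K))
    (by
      rw [← LinearMap.ker_eq_bot, LinearMap.ker_eq_bot']
      intro m hm
      rw [Matrix.ext_iff_trace_mul_right]
      intro x
      simpa using LinearMap.congr_fun hm x)
    (Subspace.dual_finrank_eq).symm

theorem tracePairing_apply (x y : M3 K) : tracePairing K x y = trace (x * y) := rfl

/-- The orthogonal complement of `S` for the trace pairing. -/
noncomputable def perp (S : Submodule K (M3 K)) : Submodule K (M3 K) :=
  S.dualAnnihilator.comap (tracePairing K).toLinearMap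

theorem mem_perp {S : Submodule K (M3 K)} {z : M3 K} :
    z ∈ perp S ↔ ∀ y ∈ S, trace (z * y) = 0 := by
  simp [perp, Submodule.mem_dualAnnihilator, tracePairing_apply]

theorem finrank_perp (S : Submodule K (M3 K)) :
    Module.finrank K S + Module.finrank K (perp S) = 9 := by
  have h1 := Subspace.finrank_add_finrank_dualAnnihilator_eq S
  have h2 : Module.finrank K (perp S) = Module.finrank K S.dualAnnihilator := by
    have : perp S = S.dualAnnihilator.map (tracePairing K).symm.toLinearMap := by
      rw [perp, Submodule.map_equiv_eq_comap_symm]; rfl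
    rw [this, LinearEquiv.finrank_map_eq]
  rw [h2, h1]
  simp [Module.finrank_matrix]

/-- `W` is orthogonal to `[x, V]`, whose dimension is at least `dim V - dim C(x)`. -/
theorem add_le_cent {V W : Submodule K (M3 K)} {x : M3 K}
    (h : ∀ v ∈ V, ∀ w ∈ W, trace (x * v * w) = trace (v * x * w)) :
    Module.finrank K V + Module.finrank K W ≤ 9 + Module.finrank K (cent x) := by
  let f := LinearMap.mulLeft K x - LinearMap.mulRight K x
  have h1 := LinearMap.finrank_range_add_finrank_ker (f.domRestrict V)
  have h2 : Module.finrank K (LinearMap.ker (f.domRestrict V)) ≤ Module.finrank K (cent x) := by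
    have : LinearMap.ker (f.domRestrict V) = (cent x).comap V.subtype := rfl
    rw [this, ← Submodule.finrank_map_subtype_eq]
    apply Submodule.finrank_mono
    exact Submodule.map_comap_le _ _
  have h3 : W ≤ perp (LinearMap.range (f.domRestrict V)) := by
    intro w hw
    rw [mem_perp]
    rintro _ ⟨⟨v, hv⟩, rfl⟩
    have := h v hv w hw
    simp only [f, LinearMap.domRestrict_apply, LinearMap.sub_apply, LinearMap.mulLeft_apply,
      LinearMap.mulRight_apply]
    rw [trace_mul_comm, sub_mul, trace_sub, this, sub_self]
  have h4 := Submodule.finrank_mono h3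
  have h5 := finrank_perp (LinearMap.range (f.domRestrict V))
  omega

theorem finrank_le_nine (V : Submodule K (M3 K)) : Module.finrank K V ≤ 9 := by
  have := finrank_perp V
  omega

/-! ### The dimension bounds -/

theorem finrank_add_le_twelve [Infinite K] {U V W : Submodule K (M3 K)}
    (h : ∀ u ∈ U, ∀ v ∈ V, ∀ w ∈ W, trace (u * v * w) = trace (v * u * w))
    (hs : 20 ≤ Module.finrank K U + Module.finrank K V + Module.finrank K W) :
    Module.finrank K V + Module.finrank K W ≤ 12 := by
  have h5 : 5 ≤ Module.finrank K U := by
    by_cases hU : ∀ x ∈ U, ∃ c : K, x = c • 1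
    · have h1 : U ≤ Submodule.span K {1} := by
        intro x hx
        obtain ⟨c, rfl⟩ := hU x hx
        exact Submodule.smul_mem _ _ (Submodule.mem_span_singleton_self _)
      have h2 := (Submodule.finrank_mono h1).trans (finrank_span_le_card _)
      have h3 := finrank_le_nine V
      have h4 := finrank_le_nine W
      simp at h2
      omega
    · push Not at hU
      obtain ⟨x, hx, hU⟩ := hU
      have h1 := add_le_cent (h x hx)
      have h2 := finrank_cent_le_six hU
      omega
  obtain ⟨x, hx, v, hv⟩ := exists_cyclic h5
  have h1 := add_le_cent (h x hx)
  have h2 := finrank_cent_le_three hv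
  omega

theorem matrix_bound [Infinite K] {U V W : Submodule K (M3 K)}
    (h : ∀ u ∈ U, ∀ v ∈ V, ∀ w ∈ W, trace (u * v * w) = trace (v * u * w)) :
    Module.finrank K U + Module.finrank K V + Module.finrank K W ≤ 19 := by
  by_contra! hs
  have h1 := finrank_add_le_twelve h hs
  have h2 := finrank_add_le_twelve (U := V) (V := W) (W := U) (fun v hv w hw u hu =>
    (trace_mul_cycle v w u).trans ((h u hu v hv w hw).trans (trace_mul_cycle v u w))) (by omega)
  have h3 := finrank_add_le_twelve (U := W) (V := U) (W := V) (fun w hw u hu v hv =>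
    (trace_mul_cycle u v w).symm.trans
      ((h u hu v hv w hw).trans (trace_mul_cycle u w v).symm)) (by omega)
  omega

/-- `matrix_bound` for `U` and `V` enlarged by the scalar matrices and `W` the orthogonal complement
of `S`. -/
theorem sl_bound [Infinite K] (h3 : (3 : K) ≠ 0) {U V S : Submodule K (M3 K)}
    (hU : ∀ u ∈ U, trace u = 0) (hV : ∀ v ∈ V, trace v = 0)
    (h : ∀ u ∈ U, ∀ v ∈ V, u * v - v * u ∈ S) :
    Module.finrank K U + Module.finrank K V ≤ Module.finrank K S + 8 := by
  have add_one : ∀ X : Submodule K (M3 K), (∀ u ∈ X, trace u = 0) →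
      Module.finrank K ↥(X ⊔ Submodule.span K {1}) = Module.finrank K X + 1 := by
    intro X hX
    have h1 : Disjoint X (Submodule.span K {1}) := by
      rw [Submodule.disjoint_span_singleton' one_ne_zero]
      intro h1
      apply h3
      simpa using hX 1 h1
    have := Submodule.finrank_sup_add_finrank_inf_eq X (Submodule.span K {1})
    rwa [h1.eq_bot, finrank_bot, add_zero, finrank_span_singleton one_ne_zero] at this
  have key := matrix_bound (U := U ⊔ Submodule.span K {1}) (V := V ⊔ Submodule.span K {1})
    (W := perp S) (by
      intro _ hu' _ hv' w hw
      obtain ⟨u, hu, _, hc, rfl⟩ := Submodule.mem_sup.1 hu'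
      obtain ⟨v, hv, _, hd, rfl⟩ := Submodule.mem_sup.1 hv'
      obtain ⟨c, rfl⟩ := Submodule.mem_span_singleton.1 hc
      obtain ⟨d, rfl⟩ := Submodule.mem_span_singleton.1 hd
      have := mem_perp.1 hw _ (h u hu v hv)
      rw [← sub_eq_zero, ← trace_sub, ← sub_mul, ← trace_mul_comm, ← this]
      congr 2
      simp only [add_mul, mul_add, smul_mul_assoc, mul_smul_comm, one_mul, mul_one, smul_add]
      rw [smul_comm c d]
      abel)
  rw [add_one U hU, add_one V hV] at key
  have := finrank_perp S
  omega

end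

/-! ### Descent from the algebraic closure -/

theorem lie_mem_baseChange {K : Type*} [Field K] {A : Type*} [LieRing A] [LieAlgebra K A]
    (F : Type*) [Field F] [Algebra K F] {U V : Submodule K A} {x y : F ⊗[K] A}
    (hx : x ∈ U.baseChange F) (hy : y ∈ V.baseChange F) :
    ⁅x, y⁆ ∈ (bracketSpan U V).baseChange F := by
  rw [Submodule.baseChange_eq_span] at hx hy
  induction hx using Submodule.span_induction with
  | zero => simp
  | add a b _ _ ha hb => rw [add_lie]; exact add_mem ha hb
  | smul c a _ ha => rw [smul_lie]; exact Submodule.smul_mem _ _ ha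
  | mem a ha =>
    obtain ⟨u, hu, rfl⟩ := ha
    induction hy using Submodule.span_induction with
    | zero => simp
    | add a b _ _ ha hb => rw [lie_add]; exact add_mem ha hb
    | smul c a _ ha => rw [lie_smul]; exact Submodule.smul_mem _ _ ha
    | mem b hb =>
      obtain ⟨v, hv, rfl⟩ := hb
      simp only [TensorProduct.mk_apply, LieAlgebra.ExtendScalars.bracket_tmul]
      exact Submodule.tmul_mem_baseChange_of_mem _ (Submodule.subset_span ⟨u, hu, v, hv, rfl⟩)

end SL3

theorem stmt0 (K : Type*) [Field K]
    (hchar : ringChar K = 0 ∨ (Nat.Prime (ringChar K) ∧ ringChar K ≠ 3))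
    (A : Type*) [LieRing A] [LieAlgebra K A] [FiniteDimensional K A]
    (e : (AlgebraicClosure K ⊗[K] A) ≃ₗ⁅AlgebraicClosure K⁆
        ↥(LieAlgebra.SpecialLinear.sl (Fin 3) (AlgebraicClosure K)))
    (U V : Submodule K A) :
    Module.finrank K ↥U + Module.finrank K ↥V ≤
      Module.finrank K ↥(bracketSpan U V) + 8 := by
  have h3 : (3 : AlgebraicClosure K) ≠ 0 := by
    intro h
    have hK : ((3 : ℕ) : K) = 0 := by
      apply (algebraMap K (AlgebraicClosure K)).injective
      rw [map_natCast, map_zero]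
      exact_mod_cast h
    have hdvd := ringChar.dvd hK
    rcases hchar with h0 | ⟨hp, hne⟩
    · rw [h0] at hdvd
      omega
    · exact hne ((Nat.prime_dvd_prime_iff_eq hp Nat.prime_three).1 hdvd)
  let g : (AlgebraicClosure K ⊗[K] A) →ₗ[AlgebraicClosure K] SL3.M3 (AlgebraicClosure K) :=
    { toFun := fun x => (e x).val
      map_add' := fun x y => congrArg Subtype.val (map_add e x y)
      map_smul' := fun c x => congrArg Subtype.val (map_smul e c x) }
  have hg : Function.Injective g := Subtype.val_injective.comp e.injective
  have hg_lie : ∀ x y, g ⁅x, y⁆ = g x * g y - g y * g x := by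
    intro x y
    have := congrArg Subtype.val (LieEquiv.map_lie e x y)
    exact this
  have hg_tr : ∀ x, Matrix.trace (g x) = 0 := fun x => (e x).2
  have hdim : ∀ X : Submodule K A,
      Module.finrank (AlgebraicClosure K) ↥((X.baseChange (AlgebraicClosure K)).map g)
        = Module.finrank K X := by
    intro X
    rw [← (Submodule.equivMapOfInjective g hg _).finrank_eq,
      ← (Submodule.toBaseChange.toLinearEquiv (AlgebraicClosure K) X).finrank_eq,
      Module.finrank_baseChange]
  have key := SL3.sl_bound h3 (U := (U.baseChange (AlgebraicClosure K)).map g)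
    (V := (V.baseChange (AlgebraicClosure K)).map g)
    (S := ((bracketSpan U V).baseChange (AlgebraicClosure K)).map g)
    (by rintro _ ⟨x, -, rfl⟩; exact hg_tr x) (by rintro _ ⟨x, -, rfl⟩; exact hg_tr x)
    (by
      rintro _ ⟨x, hx, rfl⟩ _ ⟨y, hy, rfl⟩
      exact ⟨⁅x, y⁆, SL3.lie_mem_baseChange _ hx hy, hg_lie x y⟩)
  rwa [hdim, hdim, hdim] at key
end

section
/- Let K be a field whose characteristic is 0 or a prime p ≠ 2. Then for any two K-subspaces U and V of the symplectic Lie algebra sp_4(K) one has dim_K [U,V] ≥ dim_K U + dim_K V − 10; equivalently, codim [U,V] ≤ codim U + codim V. -/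
/-- The entries of `x = [[A, B], [C, -Aᵀ]]`, where `B` and `C` are symmetric, listed by root:
`B₀₀ (2e₁), B₀₁ (e₁+e₂), A₀₁ (e₁-e₂), B₁₁ (2e₂), A₀₀, A₁₁ (Cartan), C₁₁ (-2e₂), A₁₀ (e₂-e₁),
C₀₁ (-e₁-e₂), C₀₀ (-2e₁)`. The order is the decreasing one for the height `e₁ ↦ 4`, `e₂ ↦ 1`,
which separates the roots from each other and from `0`. -/
def coord (K : Type*) [Field K] :
    ↥(LieAlgebra.Symplectic.sp (Fin 2) K) →ₗ[K] (Fin 10 → K) where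
  toFun x := ![x.1 (.inl 0) (.inr 0), x.1 (.inl 0) (.inr 1), x.1 (.inl 0) (.inl 1),
    x.1 (.inl 1) (.inr 1), x.1 (.inl 0) (.inl 0), x.1 (.inl 1) (.inl 1),
    x.1 (.inr 1) (.inl 1), x.1 (.inl 1) (.inl 0), x.1 (.inr 0) (.inl 1), x.1 (.inr 0) (.inl 0)]
  map_add' x y := by simp
  map_smul' c x := by simp

lemma coord_apply {K : Type*} [Field K] (x : ↥(LieAlgebra.Symplectic.sp (Fin 2) K)) :
    coord K x = ![x.1 (.inl 0) (.inr 0), x.1 (.inl 0) (.inr 1), x.1 (.inl 0) (.inl 1),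
    x.1 (.inl 1) (.inr 1), x.1 (.inl 0) (.inl 0), x.1 (.inl 1) (.inl 1),
    x.1 (.inr 1) (.inl 1), x.1 (.inl 1) (.inl 0), x.1 (.inr 0) (.inl 1),
    x.1 (.inr 0) (.inl 0)] := rfl

lemma sp_entries {K : Type*} [Field K] (x : ↥(LieAlgebra.Symplectic.sp (Fin 2) K)) (i j : Fin 2) :
    x.1 (.inr i) (.inr j) = - x.1 (.inl j) (.inl i) ∧
    x.1 (.inl i) (.inr j) = x.1 (.inl j) (.inr i) ∧
    x.1 (.inr i) (.inl j) = x.1 (.inr j) (.inl i) := by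
  have h : x.1.transpose * Matrix.J (Fin 2) K = Matrix.J (Fin 2) K * (-x.1) :=
    (mem_skewAdjointMatricesSubmodule _ _).1 x.2
  generalize x.1 = y at h
  have h1 := congrFun (congrFun h (.inl j)) (.inr i)
  have h2 := congrFun (congrFun h (.inr j)) (.inl i)
  have h3 := congrFun (congrFun h (.inr j)) (.inr i)
  have h4 := congrFun (congrFun h (.inl j)) (.inl i)
  simp [Matrix.mul_apply, Matrix.J, Matrix.one_apply] at h1 h2 h3 h4
  exact ⟨by grind, by grind, by grind⟩

lemma coord_injective (K : Type*) [Field K] : Function.Injective (coord K) := by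
  rw [injective_iff_map_eq_zero]
  intro x hx
  have e := sp_entries x
  rw [coord_apply] at hx
  have h := fun i => congrFun hx i
  simp [Fin.forall_fin_succ] at h e
  ext i j
  rcases i with i | i <;> rcases j with j | j <;> fin_cases i <;> fin_cases j <;>
    simp <;> grind

/-- The Lie bracket of `sp₄` in the coordinates `coord`. -/
def bracketCoord {K : Type*} [Field K] (u v : Fin 10 → K) : Fin 10 → K :=
  ![2 * (u 4 * v 0 + u 2 * v 1 - v 4 * u 0 - v 2 * u 1),
    u 4 * v 1 + u 2 * v 3 + u 7 * v 0 + u 5 * v 1 - v 4 * u 1 - v 2 * u 3 - v 7 * u 0 - v 5 * u 1,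
    u 4 * v 2 + u 2 * v 5 + u 0 * v 8 + u 1 * v 6 - v 4 * u 2 - v 2 * u 5 - v 0 * u 8 - v 1 * u 6,
    2 * (u 7 * v 1 + u 5 * v 3 - v 7 * u 1 - v 5 * u 3),
    u 2 * v 7 + u 0 * v 9 + u 1 * v 8 - v 2 * u 7 - v 0 * u 9 - v 1 * u 8,
    u 7 * v 2 + u 1 * v 8 + u 3 * v 6 - v 7 * u 2 - v 1 * u 8 - v 3 * u 6,
    2 * (u 8 * v 2 + u 6 * v 5 - v 8 * u 2 - v 6 * u 5),
    u 7 * v 4 + u 5 * v 7 + u 1 * v 9 + u 3 * v 8 - v 7 * u 4 - v 5 * u 7 - v 1 * u 9 - v 3 * u 8,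
    u 9 * v 2 + u 8 * v 5 + u 8 * v 4 + u 6 * v 7 - v 9 * u 2 - v 8 * u 5 - v 8 * u 4 - v 6 * u 7,
    2 * (u 9 * v 4 + u 8 * v 7 - v 9 * u 4 - v 8 * u 7)]

set_option maxHeartbeats 1000000 in
lemma coord_bracket {K : Type*} [Field K] (x y : ↥(LieAlgebra.Symplectic.sp (Fin 2) K)) :
    coord K ⁅x, y⁆ = bracketCoord (coord K x) (coord K y) := by
  have ex := sp_entries x
  have ey := sp_entries y
  simp only [coord_apply, LieSubalgebra.coe_bracket, Ring.lie_def, bracketCoord]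
  generalize x.1 = a at *
  generalize y.1 = b at *
  have ea := fun i j => (ex i j).1
  have eb := fun i j => (ey i j).1
  have ha₁ := (ex 1 0).2.1
  have ha₂ := (ex 1 0).2.2
  have hb₁ := (ey 1 0).2.1
  have hb₂ := (ey 1 0).2.2
  clear ex ey
  ext i
  fin_cases i <;> simp [Matrix.mul_apply, ea, eb, ha₁, ha₂, hb₁, hb₂] <;> ring

/-- Index `i` is a leading position of `S` for the coordinates `f`: some element of `S` has its
first nonzero coordinate at `i`. -/
def IsLead {K M : Type*} [Field K] [AddCommGroup M] [Module K M] {n : ℕ}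
    (f : M →ₗ[K] (Fin n → K)) (S : Submodule K M) (i : Fin n) : Prop :=
  ∃ x ∈ S, (∀ j < i, f x j = 0) ∧ f x i ≠ 0

open Classical in
/-- An element of `S` vanishing at every leading position is zero, so the leading coordinates
embed `S`. -/
lemma finrank_le_card_lead {K M : Type*} [Field K] [AddCommGroup M] [Module K M] {n : ℕ}
    (f : M →ₗ[K] (Fin n → K)) (hf : Function.Injective f) (S : Submodule K M) :
    Module.finrank K S ≤ (Finset.univ.filter (IsLead f S)).card := by
  let g : S →ₗ[K] ({i // IsLead f S i} → K) :=
    (LinearMap.funLeft K K Subtype.val).comp (f.comp S.subtype)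
  have hg : Function.Injective g := by
    rw [injective_iff_map_eq_zero]
    rintro ⟨x, hxS⟩ hx
    by_contra hne
    have hfx : ∃ i, f x i ≠ 0 := by
      by_contra! h
      exact hne (Subtype.ext (hf ((funext h).trans (map_zero f).symm)))
    obtain ⟨i, hi, hmin⟩ := WellFounded.has_min (wellFounded_lt (α := Fin n)) {i | f x i ≠ 0} hfx
    have hlead : IsLead f S i :=
      ⟨x, hxS, fun j hj => by by_contra h; exact hmin j h hj, hi⟩
    exact hi (congrFun hx ⟨i, hlead⟩)
  have h := LinearMap.finrank_le_finrank_of_injective hg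
  rwa [Module.finrank_fintype_fun_eq_card, Fintype.card_subtype] at h

open Classical in
lemma card_add_card_add_card_le {n : ℕ} (p q r : Fin n → Prop) (s t m : Fin n → Fin n)
    (hs : Function.Injective s) (ht : Function.Injective t) (hm : Function.Injective m)
    (h : ∀ i, ¬ (p (s i) ∧ q (t i) ∧ r (m i))) :
    (Finset.univ.filter p).card + (Finset.univ.filter q).card + (Finset.univ.filter r).card
      ≤ 2 * n := by
  have key : ∀ (p : Fin n → Prop) (s : Fin n → Fin n), Function.Injective s →
      (Finset.univ.filter p).card = ∑ i, if p (s i) then 1 else 0 := fun p s hs => by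
    rw [Finset.card_filter]
    exact ((Finite.injective_iff_bijective.1 hs).sum_comp (fun i => if p i then 1 else 0)).symm
  rw [key p s hs, key q t ht, key r m hm, ← Finset.sum_add_distrib, ← Finset.sum_add_distrib]
  refine (Finset.sum_le_card_nsmul _ _ 2 fun i _ => ?_).trans (by simp [mul_comm])
  have := h i
  split_ifs <;> simp_all

/-- Coordinates of a linear form `w` on `K¹⁰`: its values on the basis vectors in increasing order
of height, the two Cartan values being replaced by those on the coroots of `e₁ - e₂` and
`e₁ + e₂`. -/
def dualCoord (K : Type*) [Field K] : Module.Dual K (Fin 10 → K) →ₗ[K] (Fin 10 → K) where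
  toFun w := ![w (Pi.single 9 1), w (Pi.single 8 1), w (Pi.single 7 1), w (Pi.single 6 1),
    w (Pi.single 4 1) - w (Pi.single 5 1), w (Pi.single 4 1) + w (Pi.single 5 1),
    w (Pi.single 3 1), w (Pi.single 2 1), w (Pi.single 1 1), w (Pi.single 0 1)]
  map_add' x y := by
    ext i; fin_cases i <;> simp <;> ring
  map_smul' c x := by
    ext i; fin_cases i <;> simp <;> ring

lemma dualCoord_apply {K : Type*} [Field K] (w : Module.Dual K (Fin 10 → K)) :
    dualCoord K w = ![w (Pi.single 9 1), w (Pi.single 8 1), w (Pi.single 7 1), w (Pi.single 6 1),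
    w (Pi.single 4 1) - w (Pi.single 5 1), w (Pi.single 4 1) + w (Pi.single 5 1),
    w (Pi.single 3 1), w (Pi.single 2 1), w (Pi.single 1 1), w (Pi.single 0 1)] := rfl

lemma eq_zero_of_add_sub {K : Type*} [Field K] (h2 : (2 : K) ≠ 0) {a b : K}
    (hs : a - b = 0) (ha : a + b = 0) : a = 0 ∧ b = 0 := by
  have h : 2 * a = 0 := by linear_combination hs + ha
  have h' : a = 0 := (mul_eq_zero.1 h).resolve_left h2
  exact ⟨h', by simpa [h'] using ha⟩

lemma dualCoord_injective (K : Type*) [Field K] (h2 : (2 : K) ≠ 0) :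
    Function.Injective (dualCoord K) := by
  rw [injective_iff_map_eq_zero]
  intro w hw
  rw [dualCoord_apply] at hw
  have h := fun i => congrFun hw i
  simp [Fin.forall_fin_succ] at h
  obtain ⟨hfour, hfive⟩ := eq_zero_of_add_sub h2 h.2.2.2.2.1 h.2.2.2.2.2.1
  refine LinearMap.pi_ext' fun i => LinearMap.ext_ring ?_
  fin_cases i <;> simp [h, hfour, hfive]

/-- The triples `(leadU n, leadV n, leadW n)` match the positions of `U`, `V` and the annihilator of
`[U, V]`: the positions of a triple have weights `α`, `β`, `α + β`, and the corresponding
coefficient of `w ⁅u, v⁆` is nonzero. -/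
def leadU : Fin 10 → Fin 10 := ![5, 4, 9, 6, 8, 2, 7, 3, 1, 0]

/-- Positions in `V` of the matching described at `leadU`. -/
def leadV : Fin 10 → Fin 10 := ![3, 0, 4, 5, 1, 7, 6, 2, 9, 8]

/-- Positions in the annihilator, for `dualCoord`, of the matching described at `leadU`. -/
def leadW : Fin 10 → Fin 10 := ![6, 9, 0, 3, 5, 4, 1, 8, 2, 7]

/-- By homogeneity, `w ⁅u, v⁆` reduces to a nonzero multiple of the product of the three leading
coordinates. -/
lemma not_all_lead {K : Type*} [Field K] (h2 : (2 : K) ≠ 0) (u v : Fin 10 → K)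
    (w : Module.Dual K (Fin 10 → K)) (h : w (bracketCoord u v) = 0) (n : Fin 10)
    (hu : ∀ j < leadU n, u j = 0) (hu' : u (leadU n) ≠ 0)
    (hv : ∀ j < leadV n, v j = 0) (hv' : v (leadV n) ≠ 0)
    (hw : ∀ j < leadW n, dualCoord K w j = 0) (hw' : dualCoord K w (leadW n) ≠ 0) : False := by
  rw [LinearMap.pi_apply_eq_sum_univ] at h
  have hsingle : ∀ i : Fin 10, (fun j => if i = j then (1 : K) else 0) = Pi.single i 1 := by
    intro i; ext j; simp [Pi.single_apply, eq_comm]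
  simp only [hsingle] at h
  rw [dualCoord_apply] at hw hw'
  generalize hW : (fun i : Fin 10 => w (Pi.single i 1)) = W at *
  have hWi : ∀ i, w (Pi.single i 1) = W i := fun i => by rw [← hW]
  simp only [hWi] at h hw hw'
  clear hWi hW hsingle
  have h45 := @eq_zero_of_add_sub K _ h2 (W 4) (W 5)
  fin_cases n <;>
    simp [leadU, leadV, leadW, Fin.forall_fin_succ, Fin.sum_univ_succ, bracketCoord,
      Fin.lt_def] at * <;>
    refine mul_ne_zero (mul_ne_zero (mul_ne_zero h2 hu') hv') hw' ?_ <;>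
    simp [hu, hv, hw] at h ⊢ <;>
    grind

theorem stmt1 (K : Type*) [Field K]
    (hchar : ringChar K = 0 ∨ (Nat.Prime (ringChar K) ∧ ringChar K ≠ 2))
    (U V : Submodule K ↥(LieAlgebra.Symplectic.sp (Fin 2) K)) :
    Module.finrank K ↥U + Module.finrank K ↥V ≤
      Module.finrank K ↥(bracketSpan U V) + 10 := by
  classical
  have h2 : (2 : K) ≠ 0 := Ring.two_ne_zero (by
    rcases hchar with h | h
    · rw [h]; decide
    · exact h.2)
  set B := (bracketSpan U V).map (coord K) with hB
  have hBdim : Module.finrank K B = Module.finrank K (bracketSpan U V) :=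
    ((bracketSpan U V).equivMapOfInjective _ (coord_injective K)).finrank_eq.symm
  have hW := Subspace.finrank_add_finrank_dualAnnihilator_eq B
  rw [Module.finrank_fintype_fun_eq_card, Fintype.card_fin] at hW
  have hcard := card_add_card_add_card_le (IsLead (coord K) U) (IsLead (coord K) V)
    (IsLead (dualCoord K) B.dualAnnihilator) leadU leadV leadW
    (by decide) (by decide) (by decide) (by
      rintro n ⟨⟨x, hx, hu, hu'⟩, ⟨y, hy, hv, hv'⟩, ⟨w, hw, hd, hd'⟩⟩
      refine not_all_lead h2 _ _ w ?_ n hu hu' hv hv' hd hd'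
      rw [← coord_bracket]
      exact (Submodule.mem_dualAnnihilator w).1 hw _
        (Submodule.mem_map_of_mem (Submodule.subset_span ⟨x, hx, y, hy, rfl⟩)))
  have hU := finrank_le_card_lead (coord K) (coord_injective K) U
  have hV := finrank_le_card_lead (coord K) (coord_injective K) V
  have hA := finrank_le_card_lead (dualCoord K) (dualCoord_injective K h2) B.dualAnnihilator
  omega
end

section
/- Let K be a field whose characteristic is 0 or a prime p not dividing n, where n ≥ 3. Then for any two K-subspaces U and V of sl_n(K) one has 2·codim [U,V] ≤ 3·(codim U + codim V), where codimensions are taken inside sl_n(K) (of dimension n²−1). -/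
/-- The codimension of a subspace `W` of `L`: `dim L - dim W`. -/
noncomputable def codim (K : Type*) {L : Type*} [Field K] [AddCommGroup L] [Module K L]
    (W : Submodule K L) : ℕ :=
  Module.finrank K L - Module.finrank K ↥W


open Module Polynomial

namespace SlBracket

/-! ### The trace form -/

/-- The bilinear form `(x, y) ↦ tr (xy)` on `End K E`. -/
noncomputable def trForm (K E : Type*) [Field K] [AddCommGroup E] [Module K E] :
    LinearMap.BilinForm K (End K E) :=
  (LinearMap.mul K (End K E)).compr₂ (LinearMap.trace K E)

universe u

section
variable {K : Type u} {E : Type*} [Field K] [AddCommGroup E] [Module K E]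

@[simp] lemma trForm_apply (x y : End K E) : trForm K E x y = LinearMap.trace K E (x * y) := rfl

lemma trForm_nondegenerate [FiniteDimensional K E] : (trForm K E).Nondegenerate := by
  have key : ∀ x : End K E, (∀ y : End K E, LinearMap.trace K E (x * y) = 0) → x = 0 := by
    intro x hx
    ext v
    rw [LinearMap.zero_apply, ← Module.forall_dual_apply_eq_zero_iff K]
    intro φ
    have h := hx (φ.smulRight v)
    have : x * φ.smulRight v = φ.smulRight (x v) := by ext; simp
    rwa [this, LinearMap.trace_smulRight] at h
  refine ⟨fun x hx => key x hx, fun y hy => key y fun x => ?_⟩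
  rw [LinearMap.trace_mul_comm]; exact hy x

lemma finrank_end_eq [FiniteDimensional K E] : finrank K (End K E) = finrank K E ^ 2 := by
  rw [sq]; exact Module.finrank_linearMap K K E E

lemma finrank_add_le_of_trace_mul_eq_zero [FiniteDimensional K E] (X Y : Submodule K (End K E))
    (h : ∀ x ∈ X, ∀ y ∈ Y, LinearMap.trace K E (x * y) = 0) :
    finrank K X + finrank K Y ≤ finrank K E ^ 2 := by
  have h1 : Y ≤ (trForm K E).orthogonal X := fun y hy x hx => h x hx y hy
  have h2 := Submodule.finrank_mono h1
  rw [LinearMap.BilinForm.finrank_orthogonal trForm_nondegenerate, finrank_end_eq] at h2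
  have h3 := Submodule.finrank_le X
  rw [finrank_end_eq] at h3
  omega

lemma finrank_sup_span_one [FiniteDimensional K E] (hE : (finrank K E : K) ≠ 0)
    (X : Submodule K (End K E)) (h : ∀ x ∈ X, LinearMap.trace K E x = 0) :
    finrank K ↥(X ⊔ K ∙ (1 : End K E)) = finrank K X + 1 := by
  have h1 : (1 : End K E) ≠ 0 := by
    intro h0
    apply hE
    rw [← LinearMap.trace_one (R := K) (M := E), h0, map_zero]
  have hd : X ⊓ K ∙ (1 : End K E) = ⊥ := by
    rw [eq_bot_iff]
    rintro x ⟨hx, hx1⟩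
    obtain ⟨c, rfl⟩ := Submodule.mem_span_singleton.1 hx1
    have := h _ hx
    rw [map_smul, LinearMap.trace_one, smul_eq_mul] at this
    rcases mul_eq_zero.1 this with h | h
    · simp [h]
    · exact absurd h hE
  have := Submodule.finrank_sup_add_finrank_inf_eq X (K ∙ (1 : End K E))
  rwa [hd, finrank_bot, finrank_span_singleton h1, add_zero] at this

/-! ### Centralizers -/

/-- The map `x ↦ wx - xw` on `End K E`; its kernel is the centralizer of `w`. -/
noncomputable def adj (w : End K E) : End K E →ₗ[K] End K E :=
  LinearMap.mulLeft K w - LinearMap.mulRight K w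

@[simp] lemma adj_apply (w x : End K E) : adj w x = w * x - x * w := rfl

lemma mem_ker_adj {w x : End K E} : x ∈ LinearMap.ker (adj w) ↔ w * x = x * w := by
  rw [LinearMap.mem_ker, adj_apply, sub_eq_zero]

lemma apply_aeval_of_comm {w x : End K E} (h : w * x = x * w) (p : K[X]) (v : E) :
    x (aeval w p v) = aeval w p (x v) := by
  have h1 : Commute w x := h
  have h2 : Commute (aeval w p) x := by
    induction p using Polynomial.induction_on' with
    | add p q hp hq => rw [map_add]; exact hp.add_left hq
    | monomial n a =>
      rw [aeval_monomial]
      exact (Algebra.commute_algebraMap_left a x).mul_left (h1.pow_left n)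
  exact (congrArg (fun f : End K E => f v) h2.eq).symm

/-- A decomposition of `E` into cyclic `K[w]`-modules, given by orthogonal idempotents `e i` that
commute with `w` and generators `g i` of their ranges. It comes from the structure theorem for
torsion modules over `K[X]`. -/
lemma exists_cyclic_decomposition [FiniteDimensional K E] (w : End K E) :
    ∃ (ι : Type u) (_ : Fintype ι) (_ : DecidableEq ι) (e : ι → End K E) (g : ι → E),
      (∀ i, w * e i = e i * w) ∧ (∀ i, e i * e i = e i) ∧ (∀ i j, i ≠ j → e i * e j = 0) ∧
      (∑ i, e i = 1) ∧ (∀ i v, ∃ p : K[X], e i v = aeval w p (g i)) := by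
  classical
  obtain ⟨ι, _, q, -, m, ⟨φ⟩⟩ := Module.equiv_directSum_of_isTorsion
    (Module.AEval.isTorsion_of_finiteDimensional K E w)
  let o := Module.AEval.of K E w
  let e' : ι → (AEval K E w →ₗ[K[X]] AEval K E w) := fun i =>
    φ.symm.toLinearMap ∘ₗ DirectSum.lof K[X] ι (fun i => K[X] ⧸ K[X] ∙ q i ^ m i) i ∘ₗ
      DirectSum.component K[X] ι (fun i => K[X] ⧸ K[X] ∙ q i ^ m i) i ∘ₗ φ.toLinearMap
  let e : ι → End K E := fun i =>
    o.symm.toLinearMap ∘ₗ (e' i).restrictScalars K ∘ₗ o.toLinearMap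
  have he : ∀ i v, e i v = o.symm (e' i (o v)) := fun _ _ => rfl
  have ho : ∀ v, o (w v) = (X : K[X]) • o v := fun v => (Module.AEval.X_smul_of w v).symm
  refine ⟨ι, inferInstance, inferInstance, e,
    fun i => o.symm (φ.symm (DirectSum.lof K[X] ι (fun i => K[X] ⧸ K[X] ∙ q i ^ m i) i
      (Submodule.Quotient.mk 1))), ?_, ?_, ?_, ?_, ?_⟩
  · intro i
    ext v
    apply o.injective
    simp only [Module.End.mul_apply, he, ho, map_smul, LinearEquiv.apply_symm_apply]
  · intro i
    ext v
    simp only [Module.End.mul_apply, he, LinearEquiv.apply_symm_apply]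
    simp [e', DirectSum.component.lof_self]
  · intro i j hij
    ext v
    simp only [Module.End.mul_apply, he, LinearEquiv.apply_symm_apply]
    simp [e', DirectSum.component.of, hij.symm]
  · ext v
    apply o.injective
    apply φ.injective
    simp only [LinearMap.sum_apply, he, map_sum, LinearEquiv.apply_symm_apply, e',
      LinearMap.comp_apply, LinearEquiv.coe_coe, Module.End.one_apply]
    apply DirectSum.ext_component K[X]
    intro i
    simp [DirectSum.component.of]
  · intro i v
    obtain ⟨p, hp⟩ := Submodule.Quotient.mk_surjective _
      (DirectSum.component K[X] ι (fun i => K[X] ⧸ K[X] ∙ q i ^ m i) i (φ (o v)))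
    refine ⟨p, ?_⟩
    have h1 : (Submodule.Quotient.mk p : K[X] ⧸ K[X] ∙ q i ^ m i)
        = p • Submodule.Quotient.mk 1 := by
      rw [← Submodule.Quotient.mk_smul, smul_eq_mul, mul_one]
    apply o.injective
    have h2 : ∀ u, o (aeval w p u) = p • o u := fun u => rfl
    rw [he, h2]
    simp only [e', LinearMap.comp_apply, LinearEquiv.coe_coe, LinearEquiv.apply_symm_apply, ← hp,
      h1, map_smul]

/-- The centralizer `C` of `w` satisfies `dim C - dim [C, C] ≤ dim E`. -/
lemma finrank_centralizer_le [FiniteDimensional K E] (w : End K E) :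
    finrank K (LinearMap.ker (adj w)) ≤
      finrank K (Submodule.span K {z : End K E | ∃ x ∈ LinearMap.ker (adj w),
        ∃ y ∈ LinearMap.ker (adj w), x * y - y * x = z}) + finrank K E := by
  obtain ⟨ι, _, _, e, g, hc, hid, hort, hsum, hgen⟩ := exists_cyclic_decomposition w
  set D := Submodule.span K {z : End K E | ∃ x ∈ LinearMap.ker (adj w),
        ∃ y ∈ LinearMap.ker (adj w), x * y - y * x = z} with hD
  -- `Φ` records the diagonal blocks `e i * x * e i`, each determined by its value at `g i`.
  let Φ : End K E →ₗ[K] E := ∑ i, (e i) ∘ₗ LinearMap.applyₗ (g i)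
  have hΦ : ∀ x, Φ x = ∑ i, e i (x (g i)) := fun x => by simp [Φ]
  let Ψ := Φ.domRestrict (LinearMap.ker (adj w))
  have hker : (LinearMap.ker Ψ).map (LinearMap.ker (adj w)).subtype ≤ D := by
    rintro _ ⟨⟨x, hx⟩, hx0, rfl⟩
    have hx0 : ∑ i, e i (x (g i)) = 0 := by rw [← hΦ]; exact hx0
    rw [mem_ker_adj] at hx
    have h1 : ∀ j, e j (x (g j)) = 0 := by
      intro j
      have h := congrArg (e j) hx0
      rw [map_sum, Finset.sum_eq_single j, map_zero] at h
      · rwa [← Module.End.mul_apply, hid] at h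
      · intro i _ hij
        rw [← Module.End.mul_apply, hort j i hij.symm, LinearMap.zero_apply]
      · simp
    have h2 : ∀ j, e j * x * e j = 0 := by
      intro j
      ext v
      obtain ⟨p, hp⟩ := hgen j v
      rw [Module.End.mul_apply, hp, apply_aeval_of_comm, Module.End.mul_apply, h1]
      · simp
      · rw [← mul_assoc, hc, mul_assoc, hx, mul_assoc]
    have h3 : x = ∑ i, ∑ j, e i * x * e j := by
      simp_rw [← Finset.mul_sum, hsum, mul_one, ← Finset.sum_mul, hsum, one_mul]
    change x ∈ D
    rw [h3]
    refine Submodule.sum_mem _ fun i _ => Submodule.sum_mem _ fun j _ => ?_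
    by_cases hij : i = j
    · subst hij; rw [h2]; exact D.zero_mem
    · -- An off-diagonal block `y = e i * x * e j` equals the commutator of `e i` and `y`.
      refine Submodule.subset_span ⟨e i, mem_ker_adj.2 (hc i), e i * x * e j, mem_ker_adj.2 ?_, ?_⟩
      · calc w * (e i * x * e j) = (w * e i) * x * e j := by noncomm_ring
          _ = e i * (w * x) * e j := by rw [hc]; noncomm_ring
          _ = e i * x * (w * e j) := by rw [hx]; noncomm_ring
          _ = _ := by rw [hc]; noncomm_ring
      · calc e i * (e i * x * e j) - e i * x * e j * e i
            = (e i * e i) * x * e j - e i * x * (e j * e i) := by noncomm_ring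
          _ = _ := by rw [hid, hort j i (Ne.symm hij)]; simp
  have h4 := Submodule.finrank_mono hker
  rw [Submodule.finrank_map_subtype_eq] at h4
  have h5 := LinearMap.finrank_range_add_finrank_ker Ψ
  have h6 := Submodule.finrank_le (LinearMap.range Ψ)
  omega

/-- The centralizer of a nonscalar `w` has dimension at most `n² - 2n + 2`. Choose a vector `v` and
a functional `ψ` such that `v, wv` and `ψ, ψw` are linearly independent. The map `x ↦ (xv, ψx)` on
the centralizer has image of dimension at most `2n - 2` and kernel of dimension at most
`(n - 2)²`. -/
lemma finrank_centralizer_add_le [FiniteDimensional K E] (w : End K E)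
    (hw : ∀ a : K, w ≠ a • 1) :
    finrank K (LinearMap.ker (adj w)) + 2 * finrank K E ≤ finrank K E ^ 2 + 2 := by
  obtain ⟨v, hv⟩ : ∃ v, LinearIndependent K ![v, w v] := by
    by_contra! h
    obtain ⟨a, ha⟩ := LinearMap.exists_eq_smul_id_of_forall_notLinearIndependent h
    exact hw a ha
  obtain ⟨ψ, hψ⟩ : ∃ ψ : Dual K E, LinearIndependent K ![ψ, w.dualMap ψ] := by
    by_contra! h
    obtain ⟨a, ha⟩ := LinearMap.exists_eq_smul_id_of_forall_notLinearIndependent h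
    refine hw a (LinearMap.ext fun x => ?_)
    rw [← sub_eq_zero, ← Module.forall_dual_apply_eq_zero_iff K]
    intro φ
    have := congrArg (fun f : Dual K E →ₗ[K] Dual K E => f φ x) ha
    simp at this
    simp [this]
  set P := Submodule.span K (Set.range ![v, w v])
  set R := Submodule.span K (Set.range ![ψ, w.dualMap ψ])
  have hP : finrank K P = 2 := by simpa using finrank_span_eq_card hv
  have hR : finrank K R = 2 := by simpa using finrank_span_eq_card hψ
  have hPn := Submodule.finrank_quotient_add_finrank P
  have hRn := Subspace.finrank_add_finrank_dualCoannihilator_eq R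
  let T : End K E →ₗ[K] E × Dual K E :=
    (LinearMap.applyₗ v).prod (LinearMap.compRight K ψ)
  have hT : ∀ x, T x = (x v, ψ ∘ₗ x) := fun x => rfl
  let T' := T.domRestrict (LinearMap.ker (adj w))
  -- For `(a, b)` in the range of `T'` one has `ψ a = b v` and `ψ (w a) = b (w v)`; these are two
  -- independent linear conditions.
  let l₁ : Dual K (E × Dual K E) := ψ.coprod (-(Dual.eval K E v))
  let l₂ : Dual K (E × Dual K E) := (w.dualMap ψ).coprod (-(Dual.eval K E (w v)))
  have hl : LinearIndependent K ![l₁, l₂] := by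
    apply LinearIndependent.of_comp (LinearMap.inl K E (Dual K E)).dualMap
    have : (LinearMap.inl K E (Dual K E)).dualMap ∘ ![l₁, l₂] = ![ψ, w.dualMap ψ] := by
      ext i x
      fin_cases i <;> simp [l₁, l₂]
    rw [this]
    exact hψ
  have hl2 : finrank K (Submodule.span K (Set.range ![l₁, l₂])) = 2 := by
    simpa using finrank_span_eq_card hl
  have hln := Subspace.finrank_add_finrank_dualCoannihilator_eq
    (Submodule.span K (Set.range ![l₁, l₂]))
  have hrange : LinearMap.range T' ≤
      (Submodule.span K (Set.range ![l₁, l₂])).dualCoannihilator := by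
    rintro _ ⟨⟨x, hx⟩, rfl⟩
    rw [mem_ker_adj] at hx
    have hx' : ∀ u, w (x u) = x (w u) := fun u => LinearMap.congr_fun hx u
    rw [Submodule.mem_dualCoannihilator]
    intro φ hφ
    change φ (x v, ψ ∘ₗ x) = 0
    induction hφ using Submodule.span_induction with
    | mem φ h =>
      obtain ⟨i, rfl⟩ := h
      fin_cases i
      · simp [l₁]
      · simp [l₂, hx']
    | zero => simp
    | add a b _ _ ha hb => simp only [LinearMap.add_apply, ha, hb, add_zero]
    | smul c a _ ha => simp only [LinearMap.smul_apply, ha, smul_zero]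
  -- An element of the kernel of `T'` vanishes on `P` and takes values in the common kernel of `R`.
  let J : (E ⧸ P →ₗ[K] R.dualCoannihilator) →ₗ[K] End K E :=
    { toFun := fun h => R.dualCoannihilator.subtype ∘ₗ h ∘ₗ P.mkQ
      map_add' := fun _ _ => by ext; simp
      map_smul' := fun _ _ => by ext; simp }
  have hker : (LinearMap.ker T').map (LinearMap.ker (adj w)).subtype ≤ LinearMap.range J := by
    rintro _ ⟨⟨x, hx⟩, hx0, rfl⟩
    rw [mem_ker_adj] at hx
    have hx' : ∀ u, w (x u) = x (w u) := fun u => LinearMap.congr_fun hx u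
    have hx0 : (x v, ψ ∘ₗ x) = 0 := hx0
    have h1 : x v = 0 := congrArg Prod.fst hx0
    have h2 : ∀ u, ψ (x u) = 0 := fun u => LinearMap.congr_fun (congrArg Prod.snd hx0) u
    have hxP : P ≤ LinearMap.ker x := by
      rw [Submodule.span_le]
      rintro _ ⟨i, rfl⟩
      fin_cases i
      · simpa using h1
      · simp [← hx', h1]
    have hxR : ∀ u, x u ∈ R.dualCoannihilator := by
      intro u
      rw [Submodule.mem_dualCoannihilator]
      intro φ hφ
      induction hφ using Submodule.span_induction with
      | mem φ h =>
        obtain ⟨i, rfl⟩ := h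
        fin_cases i
        · simpa using h2 u
        · simp [hx', h2]
      | zero => simp
      | add a b _ _ ha hb => simp only [LinearMap.add_apply, ha, hb, add_zero]
      | smul c a _ ha => simp only [LinearMap.smul_apply, ha, smul_zero]
    refine ⟨P.liftQ (x.codRestrict _ hxR) ?_, ?_⟩
    · intro u hu
      have := hxP hu
      rw [LinearMap.mem_ker] at this ⊢
      exact Subtype.ext this
    · ext u
      simp [J]
  have h4 := Submodule.finrank_mono hker
  rw [Submodule.finrank_map_subtype_eq] at h4
  have h4' := LinearMap.finrank_range_le J
  rw [Module.finrank_linearMap] at h4'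
  have h5 := LinearMap.finrank_range_add_finrank_ker T'
  have h6 := Submodule.finrank_mono hrange
  rw [Module.finrank_prod, Subspace.dual_finrank_eq] at hln
  obtain ⟨m, hm⟩ : ∃ m, finrank K E = m + 2 := ⟨finrank K (E ⧸ P), by omega⟩
  have e1 : finrank K (E ⧸ P) = m := by omega
  have e2 : finrank K R.dualCoannihilator = m := by omega
  rw [e1, e2] at h4'
  rw [hm]
  have : (m + 2) ^ 2 = m * m + 4 * m + 4 := by ring
  omega

/-! ### Maximal rank and the estimate over an infinite field -/

/-- If `f` has maximal rank among the maps `f + s • g`, then `g` maps `ker f` into `range f`.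
Otherwise, for a complement `C` of `ker f` and `x ∈ ker f` with `g x ∉ range f`, the map
`(c, k) ↦ (f + s • g) c + k • g x` is injective on `C × K` for `s = 0`, hence for all but finitely
many `s`, while its range lies in that of `f + s • g` when `s ≠ 0`. -/
lemma apply_mem_range_of_finrank_range_le {F G : Type*} [AddCommGroup F] [Module K F]
    [AddCommGroup G] [Module K G] [Infinite K] [FiniteDimensional K F] [FiniteDimensional K G]
    (f g : F →ₗ[K] G)
    (h : ∀ s : K, finrank K (LinearMap.range (f + s • g)) ≤ finrank K (LinearMap.range f))
    (x : F) (hx : f x = 0) : g x ∈ LinearMap.range f := by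
  by_contra hgx
  obtain ⟨C, hC⟩ := (LinearMap.ker f).exists_isCompl
  let h₀ : C × K →ₗ[K] G := (f.domRestrict C).coprod (LinearMap.toSpanSingleton K G (g x))
  let h₁ : C × K →ₗ[K] G := (g.domRestrict C).coprod 0
  have hinj : LinearMap.ker h₀ = ⊥ := by
    rw [eq_bot_iff]
    rintro ⟨c, k⟩ hck
    have hck : f c + k • g x = 0 := hck
    have hk : k = 0 := by
      by_contra hk
      apply hgx
      refine ⟨-(k⁻¹ • (c : F)), ?_⟩
      have : g x = k⁻¹ • (k • g x) := by rw [smul_smul, inv_mul_cancel₀ hk, one_smul]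
      rw [this, eq_neg_of_add_eq_zero_right hck, map_neg, map_smul, smul_neg]
    rw [hk, zero_smul, add_zero] at hck
    have hc : (c : F) ∈ LinearMap.ker f ⊓ C := ⟨hck, c.2⟩
    rw [hC.inf_eq_bot, Submodule.mem_bot] at hc
    have : c = 0 := Subtype.ext hc
    simp [hk, this]
  obtain ⟨p, hp⟩ := h₀.exists_leftInverse_of_injective hinj
  let N : End K (C × K) := p ∘ₗ h₁
  -- With `s = -t⁻¹`, the map `p ∘ (h₀ + s • h₁) = 1 + s • N` is `t⁻¹ • (t - N)`, which is invertible
  -- as soon as `t` is nonzero and outside the spectrum of `N`.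
  obtain ⟨t, ht⟩ := ((Module.End.finite_spectrum N).union
    (Set.finite_singleton (0 : K))).infinite_compl.nonempty
  simp only [Set.mem_compl_iff, Set.mem_union, Set.mem_singleton_iff, not_or] at ht
  obtain ⟨htN, ht0⟩ := ht
  rw [spectrum.notMem_iff] at htN
  have hs0 : (-t⁻¹) ≠ 0 := by simpa using ht0
  have hinj' : Function.Injective (h₀ + (-t⁻¹) • h₁) := by
    have h2 : Function.Injective (algebraMap K (End K (C × K)) t - N) :=
      ((Module.End.isUnit_iff _).1 htN).injective
    intro a b hab
    apply h2
    have h3 : ∀ a, (algebraMap K (End K (C × K)) t - N) a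
        = t • p ((h₀ + (-t⁻¹) • h₁) a) := by
      intro a
      have h4 : p (h₀ a) = a := LinearMap.congr_fun hp a
      rw [LinearMap.add_apply, map_add, h4, LinearMap.smul_apply, map_smul, smul_add, smul_smul,
        mul_neg, mul_inv_cancel₀ ht0]
      simp [N, Module.algebraMap_end_apply, sub_eq_add_neg]
    rw [h3, h3, hab]
  have h5 := LinearMap.finrank_range_of_inj hinj'
  have h6 : LinearMap.range (h₀ + (-t⁻¹) • h₁) ≤ LinearMap.range (f + (-t⁻¹) • g) := by
    rintro _ ⟨⟨c, k⟩, rfl⟩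
    refine ⟨c + ((-t⁻¹)⁻¹ * k) • x, ?_⟩
    have h7 : (f + (-t⁻¹) • g) x = (-t⁻¹) • g x := by simp [hx]
    rw [map_add, map_smul, h7, smul_smul, mul_comm, ← mul_assoc, mul_inv_cancel₀ hs0, one_mul]
    simp only [h₀, h₁, LinearMap.add_apply, LinearMap.smul_apply, LinearMap.coprod_apply,
      LinearMap.domRestrict_apply, LinearMap.toSpanSingleton_apply, LinearMap.zero_apply, add_zero]
    abel
  have h8 := Submodule.finrank_mono h6
  have h9 := h (-t⁻¹)
  have h10 := Submodule.finrank_add_eq_of_isCompl hC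
  have h11 := LinearMap.finrank_range_add_finrank_ker f
  rw [h5, Module.finrank_prod, finrank_self] at h8
  omega

/-- The estimate over an infinite field, for spaces `U`, `V`, `W` of traceless endomorphisms on
which `tr (w[u, v])` vanishes. With codimensions taken in the traceless endomorphisms it reads
`2 dim W ≤ 3 (codim U + codim V)`. -/
theorem two_mul_finrank_le [FiniteDimensional K E] [Infinite K] (hE : (finrank K E : K) ≠ 0)
    (U V W : Submodule K (End K E))
    (hU : ∀ x ∈ U, LinearMap.trace K E x = 0) (hV : ∀ x ∈ V, LinearMap.trace K E x = 0)
    (hW : ∀ x ∈ W, LinearMap.trace K E x = 0)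
    (h : ∀ u ∈ U, ∀ v ∈ V, ∀ w ∈ W, LinearMap.trace K E (w * (u * v - v * u)) = 0) :
    2 * finrank K W + 3 * (finrank K U + finrank K V) + 6 ≤ 6 * finrank K E ^ 2 := by
  have hU1 := finrank_sup_span_one hE U hU
  have hV1 := finrank_sup_span_one hE V hV
  have hU2 := Submodule.finrank_le (U ⊔ K ∙ (1 : End K E))
  have hV2 := Submodule.finrank_le (V ⊔ K ∙ (1 : End K E))
  rw [finrank_end_eq] at hU2 hV2
  rcases eq_or_ne W ⊥ with rfl | hW0
  · rw [finrank_bot]; omega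
  obtain ⟨w₁, hw₁, hw₁0⟩ := Submodule.exists_mem_ne_zero_of_ne_bot hW0
  let F : W → ℕ := fun w => finrank K (LinearMap.ker (adj (w : End K E)))
  obtain ⟨⟨w, hw⟩, hmin⟩ : ∃ w, ∀ w', F w ≤ F w' :=
    ⟨Function.argmin F, fun x => Function.argmin_le F x⟩
  -- `w` may be taken to minimize the dimension of the centralizer, so the bound for the nonscalar
  -- element `w₁` applies to it.
  have hc1 : finrank K (LinearMap.ker (adj w)) + 2 * finrank K E ≤ finrank K E ^ 2 + 2 := by
    refine le_trans (Nat.add_le_add_right (hmin ⟨w₁, hw₁⟩) _) (finrank_centralizer_add_le w₁ ?_)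
    rintro a rfl
    have := hW _ hw₁
    rw [map_smul, LinearMap.trace_one, smul_eq_mul] at this
    rcases mul_eq_zero.1 this with h | h
    · simp [h] at hw₁0
    · exact hE h
  -- `adj w` maps `U + K·1` into the orthogonal of `V + K·1`.
  have hc2 : finrank K U + 1 + (finrank K V + 1) ≤
      finrank K E ^ 2 + finrank K (LinearMap.ker (adj w)) := by
    have h1 := finrank_add_le_of_trace_mul_eq_zero ((U ⊔ K ∙ (1 : End K E)).map (adj w))
      (V ⊔ K ∙ (1 : End K E)) (by
        rintro _ ⟨u', hu', rfl⟩ v' hv'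
        obtain ⟨u, hu, u1, hu1, rfl⟩ := Submodule.mem_sup.1 hu'
        obtain ⟨v, hv, v1, hv1, rfl⟩ := Submodule.mem_sup.1 hv'
        obtain ⟨c, rfl⟩ := Submodule.mem_span_singleton.1 hu1
        obtain ⟨d, rfl⟩ := Submodule.mem_span_singleton.1 hv1
        have h2 : adj w (u + c • 1) * (v + d • 1)
            = (w * u * v - u * w * v) + d • (w * u - u * w) := by
          simp [mul_add, add_mul, sub_mul]
        have h3 := h u hu v hv w hw
        rw [mul_sub, map_sub, ← mul_assoc, ← mul_assoc, LinearMap.trace_mul_cycle K w v u] at h3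
        rw [h2, map_add, map_smul, map_sub, map_sub, LinearMap.trace_mul_comm K w u, sub_self,
          smul_zero, add_zero, h3])
    have h2 := LinearMap.finrank_range_add_finrank_ker
      ((adj w).domRestrict (U ⊔ K ∙ (1 : End K E)))
    have h3 : finrank K (LinearMap.ker ((adj w).domRestrict (U ⊔ K ∙ (1 : End K E)))) ≤
        finrank K (LinearMap.ker (adj w)) := by
      rw [← Submodule.finrank_map_subtype_eq]
      apply Submodule.finrank_mono
      rintro _ ⟨x, hx, rfl⟩
      exact hx
    rw [LinearMap.range_domRestrict] at h2
    omega
  have hc3 := finrank_centralizer_le w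
  set D := Submodule.span K {z : End K E | ∃ x ∈ LinearMap.ker (adj w),
        ∃ y ∈ LinearMap.ker (adj w), x * y - y * x = z} with hD
  have hDW : ∀ d ∈ D, LinearMap.trace K E d = 0 ∧ ∀ w' ∈ W, LinearMap.trace K E (d * w') = 0 := by
    intro d hd
    induction hd using Submodule.span_induction with
    | mem d hd =>
      obtain ⟨x, hx, y, hy, rfl⟩ := hd
      refine ⟨by rw [map_sub, LinearMap.trace_mul_comm, sub_self], fun w' hw' => ?_⟩
      obtain ⟨z, hz⟩ := apply_mem_range_of_finrank_range_le (adj w) (adj w') (by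
        intro s
        have h1 : adj w + s • adj w' = adj (w + s • w') := by
          ext1 x; simp [add_mul, mul_add, smul_sub]; abel
        rw [h1]
        have h2 := hmin ⟨w + s • w', W.add_mem hw (W.smul_mem s hw')⟩
        have h3 := LinearMap.finrank_range_add_finrank_ker (adj w)
        have h4 := LinearMap.finrank_range_add_finrank_ker (adj (w + s • w'))
        change finrank K (LinearMap.ker (adj w)) ≤
          finrank K (LinearMap.ker (adj (w + s • w'))) at h2
        omega) x hx
      rw [adj_apply, adj_apply] at hz
      have hy := mem_ker_adj.1 hy
      -- `tr([x,y]w') = tr([w',x]y) = tr([w,z]y) = tr(z[y,w]) = 0`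
      have h5 : LinearMap.trace K E ((w' * x - x * w') * y) = 0 := by
        rw [← hz, sub_mul, map_sub, LinearMap.trace_mul_cycle K w z y, mul_assoc z w y, hy,
          LinearMap.trace_mul_comm K z, sub_self]
      rw [← h5, sub_mul, sub_mul, map_sub, map_sub, LinearMap.trace_mul_cycle K x y w',
        LinearMap.trace_mul_cycle K x w' y]
    | zero => simp
    | add a b _ _ ha hb =>
      exact ⟨by rw [map_add, ha.1, hb.1, add_zero], fun w' hw' => by
        rw [add_mul, map_add, ha.2 w' hw', hb.2 w' hw', add_zero]⟩
    | smul c a _ ha =>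
      exact ⟨by rw [map_smul, ha.1, smul_zero], fun w' hw' => by
        rw [smul_mul_assoc, map_smul, ha.2 w' hw', smul_zero]⟩
  have hD1 := finrank_sup_span_one hE D fun d hd => (hDW d hd).1
  have hWD := finrank_add_le_of_trace_mul_eq_zero (D ⊔ K ∙ (1 : End K E)) W (by
    intro d' hd' w' hw'
    obtain ⟨d, hd, d1, hd1, rfl⟩ := Submodule.mem_sup.1 hd'
    obtain ⟨c, rfl⟩ := Submodule.mem_span_singleton.1 hd1
    rw [add_mul, map_add, (hDW d hd).2 w' hw', smul_mul_assoc, one_mul, map_smul, hW w' hw',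
      smul_zero, add_zero])
  omega

end

/-! ### Extension of scalars -/

lemma exists_linearIndependent_mem {K M : Type*} [Field K] [AddCommGroup M] [Module K M]
    [FiniteDimensional K M] (S : Submodule K M) :
    ∃ b : Fin (finrank K S) → M, LinearIndependent K b ∧ ∀ i, b i ∈ S :=
  ⟨fun i => (Module.finBasis K S i : M),
    (Module.finBasis K S).linearIndependent.map' S.subtype S.ker_subtype,
    fun i => (Module.finBasis K S i).2⟩

section BaseChange
variable (K L : Type*) [Field K] [Field L] [Algebra K L] (n : ℕ)

/-- Extension of scalars of endomorphisms of `Kⁿ`, through their matrices. -/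
noncomputable def extendEnd : End K (Fin n → K) →+* End L (Fin n → L) :=
  (Matrix.toLinAlgEquiv' (R := L) (n := Fin n)).toRingEquiv.toRingHom.comp
    ((algebraMap K L).mapMatrix.comp
      (LinearMap.toMatrixAlgEquiv' (R := K) (n := Fin n)).toRingEquiv.toRingHom)

variable {K n}

lemma extendEnd_apply (x : End K (Fin n → K)) :
    extendEnd K L n x = Matrix.toLin' ((LinearMap.toMatrix' x).map (algebraMap K L)) := rfl

lemma trace_extendEnd (x : End K (Fin n → K)) :
    LinearMap.trace L _ (extendEnd K L n x) = algebraMap K L (LinearMap.trace K _ x) := by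
  rw [extendEnd_apply, Matrix.trace_toLin'_eq, LinearMap.trace_eq_matrix_trace K (Pi.basisFun K _),
    LinearMap.toMatrix_eq_toMatrix', AddMonoidHom.map_trace]

/-- The `L`-span of a `K`-subspace of `End K Kⁿ` inside `End L Lⁿ`. -/
noncomputable def extendSub (S : Submodule K (End K (Fin n → K))) :
    Submodule L (End L (Fin n → L)) :=
  Submodule.span L (extendEnd K L n '' S)

lemma linearIndependent_extendEnd {ι : Type*} {b : ι → End K (Fin n → K)}
    (hb : LinearIndependent K b) : LinearIndependent L fun i => extendEnd K L n (b i) := by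
  let f : End K (Fin n → K) →ₗ[K] (Fin n × Fin n → K) :=
    { toFun := fun x p => LinearMap.toMatrix' x p.1 p.2
      map_add' := fun x y => by ext; simp
      map_smul' := fun c x => by ext; simp }
  have hf : LinearMap.ker f = ⊥ := by
    rw [LinearMap.ker_eq_bot]
    intro x y hxy
    apply LinearMap.toMatrix'.injective
    ext i j
    exact congrFun hxy (i, j)
  let g : (Fin n × Fin n → L) →ₗ[L] End L (Fin n → L) :=
    { toFun := fun c => Matrix.toLin' (Matrix.of fun i j => c (i, j))
      map_add' := fun x y => by rw [← map_add]; rfl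
      map_smul' := fun c x => by rw [RingHom.id_apply, ← map_smul]; rfl }
  have hg : LinearMap.ker g = ⊥ := by
    rw [LinearMap.ker_eq_bot]
    intro x y hxy
    ext ⟨i, j⟩
    exact congrFun (congrFun (Matrix.toLin'.injective hxy) i) j
  exact ((linearIndependent_algebraMap_comp_iff (S := L)).2 (hb.map' f hf)).map' g hg

lemma finrank_le_extendSub (S : Submodule K (End K (Fin n → K))) :
    finrank K S ≤ finrank L (extendSub L S) := by
  obtain ⟨b, hb, hbS⟩ := exists_linearIndependent_mem S
  have hd := linearIndependent_extendEnd L hb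
  have h1 := finrank_span_eq_card hd
  rw [Fintype.card_fin] at h1
  rw [← h1]
  apply Submodule.finrank_mono
  apply Submodule.span_mono
  rintro _ ⟨i, rfl⟩
  exact ⟨_, hbS i, rfl⟩

lemma trace_extendSub (S : Submodule K (End K (Fin n → K)))
    (hS : ∀ x ∈ S, LinearMap.trace K _ x = 0) :
    ∀ x ∈ extendSub L S, LinearMap.trace L _ x = 0 := by
  have : extendSub L S ≤ LinearMap.ker (LinearMap.trace L (Fin n → L)) := by
    rw [extendSub, Submodule.span_le]
    rintro _ ⟨x, hx, rfl⟩
    simp [trace_extendEnd, hS x hx]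
  exact fun x hx => this hx

lemma trace_bracket_extendSub (U V W : Submodule K (End K (Fin n → K)))
    (h : ∀ u ∈ U, ∀ v ∈ V, ∀ w ∈ W, LinearMap.trace K _ (w * (u * v - v * u)) = 0) :
    ∀ u ∈ extendSub L U, ∀ v ∈ extendSub L V, ∀ w ∈ extendSub L W,
      LinearMap.trace L _ (w * (u * v - v * u)) = 0 := by
  intro u hu v hv w hw
  induction hu using Submodule.span_induction with
  | zero => simp
  | add a b _ _ ha hb =>
    have : w * ((a + b) * v - v * (a + b)) = w * (a * v - v * a) + w * (b * v - v * b) := by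
      simp only [mul_add, add_mul, mul_sub]; abel
    rw [this, map_add, ha, hb, add_zero]
  | smul c a _ ha =>
    rw [← smul_zero c, ← ha, ← map_smul]; simp [mul_sub]
  | mem u hu =>
  induction hv using Submodule.span_induction with
  | zero => simp
  | add a b _ _ ha hb =>
    have : w * (u * (a + b) - (a + b) * u) = w * (u * a - a * u) + w * (u * b - b * u) := by
      simp only [mul_add, add_mul, mul_sub]; abel
    rw [this, map_add, ha, hb, add_zero]
  | smul c a _ ha =>
    rw [← smul_zero c, ← ha, ← map_smul]; simp [mul_sub]
  | mem v hv =>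
  induction hw using Submodule.span_induction with
  | zero => simp
  | add a b _ _ ha hb => rw [add_mul, map_add, ha, hb, add_zero]
  | smul c a _ ha => rw [smul_mul_assoc, map_smul, ha, smul_zero]
  | mem w hw =>
  obtain ⟨u, hu, rfl⟩ := hu
  obtain ⟨v, hv, rfl⟩ := hv
  obtain ⟨w, hw, rfl⟩ := hw
  rw [← map_mul, ← map_mul, ← map_sub, ← map_mul, trace_extendEnd, h u hu v hv w hw, map_zero]

end BaseChange

/-- The estimate of `two_mul_finrank_le` over an arbitrary field in which `n ≠ 0`. -/
lemma two_mul_finrank_le' {K : Type*} [Field K] {n : ℕ} (hn : (n : K) ≠ 0)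
    (U V W : Submodule K (End K (Fin n → K)))
    (hU : ∀ x ∈ U, LinearMap.trace K _ x = 0) (hV : ∀ x ∈ V, LinearMap.trace K _ x = 0)
    (hW : ∀ x ∈ W, LinearMap.trace K _ x = 0)
    (h : ∀ u ∈ U, ∀ v ∈ V, ∀ w ∈ W, LinearMap.trace K _ (w * (u * v - v * u)) = 0) :
    2 * finrank K W + 3 * (finrank K U + finrank K V) + 6 ≤ 6 * n ^ 2 := by
  let L := AlgebraicClosure K
  have : Infinite L := IsAlgClosed.instInfinite
  have hn' : (finrank L (Fin n → L) : L) ≠ 0 := by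
    rw [finrank_fin_fun, ← map_natCast (algebraMap K L)]
    exact (_root_.map_ne_zero _).2 hn
  have key := two_mul_finrank_le hn' (extendSub L U) (extendSub L V) (extendSub L W)
    (trace_extendSub L U hU) (trace_extendSub L V hV) (trace_extendSub L W hW)
    (trace_bracket_extendSub L U V W h)
  rw [finrank_fin_fun] at key
  have h1 := finrank_le_extendSub L U
  have h2 := finrank_le_extendSub L V
  have h3 := finrank_le_extendSub L W
  omega

/-! ### Passage to `sl_n` -/

lemma finrank_sl {K : Type*} [Field K] {n : ℕ} (hn : n ≠ 0) :
    finrank K (LieAlgebra.SpecialLinear.sl (Fin n) K) + 1 = n ^ 2 := by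
  have h1 := LinearMap.finrank_range_add_finrank_ker (Matrix.traceLinearMap (Fin n) K K)
  have h2 : LinearMap.range (Matrix.traceLinearMap (Fin n) K K) = ⊤ := by
    rw [LinearMap.range_eq_top]
    intro c
    have i : Fin n := ⟨0, Nat.pos_of_ne_zero hn⟩
    exact ⟨Matrix.single i i c, by simp⟩
  rw [h2, finrank_top, finrank_self, Module.finrank_matrix, finrank_self, Fintype.card_fin,
    mul_one] at h1
  have h3 : finrank K (LieAlgebra.SpecialLinear.sl (Fin n) K) =
    finrank K (LinearMap.ker (Matrix.traceLinearMap (Fin n) K K)) := rfl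
  rw [h3, sq]
  omega

/-- The inclusion of `sl_n` into the endomorphisms of `Kⁿ`. -/
noncomputable def slToEnd (K : Type*) [Field K] (n : ℕ) :
    LieAlgebra.SpecialLinear.sl (Fin n) K →ₗ[K] End K (Fin n → K) :=
  Matrix.toLin'.toLinearMap ∘ₗ
    { toFun := Subtype.val, map_add' := fun _ _ => rfl, map_smul' := fun _ _ => rfl }

section
variable {K : Type*} [Field K] {n : ℕ}

lemma slToEnd_injective : Function.Injective (slToEnd K n) :=
  Matrix.toLin'.injective.comp Subtype.val_injective

lemma trace_slToEnd (x : LieAlgebra.SpecialLinear.sl (Fin n) K) :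
    LinearMap.trace K _ (slToEnd K n x) = 0 := by
  change LinearMap.trace K _ (Matrix.toLin' (x : Matrix (Fin n) (Fin n) K)) = 0
  rw [Matrix.trace_toLin'_eq]
  exact x.2

lemma slToEnd_lie (x y : LieAlgebra.SpecialLinear.sl (Fin n) K) :
    slToEnd K n ⁅x, y⁆ =
      slToEnd K n x * slToEnd K n y - slToEnd K n y * slToEnd K n x := by
  change Matrix.toLin' (⁅x, y⁆ : LieAlgebra.SpecialLinear.sl (Fin n) K).val = _
  rw [LieAlgebra.SpecialLinear.sl_bracket, map_sub, Matrix.toLin'_mul, Matrix.toLin'_mul]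
  rfl

end

end SlBracket

open SlBracket in
theorem stmt2 (K : Type*) [Field K] (n : ℕ) (hn : 3 ≤ n)
    (hchar : ringChar K = 0 ∨ (Nat.Prime (ringChar K) ∧ ¬ ringChar K ∣ n))
    (U V : Submodule K ↥(LieAlgebra.SpecialLinear.sl (Fin n) K)) :
    2 * codim K (bracketSpan U V) ≤ 3 * (codim K U + codim K V) := by
  have hnK : (n : K) ≠ 0 := by
    rw [Ne, ringChar.spec]
    rcases hchar with h | h
    · rw [h, zero_dvd_iff]; omega
    · exact h.2
  have hfr : ∀ S : Submodule K (LieAlgebra.SpecialLinear.sl (Fin n) K),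
      finrank K (S.map (slToEnd K n)) = finrank K S := fun S =>
    (LinearEquiv.finrank_eq (Submodule.equivMapOfInjective _ slToEnd_injective S)).symm
  have htr : ∀ S : Submodule K (LieAlgebra.SpecialLinear.sl (Fin n) K),
      ∀ x ∈ S.map (slToEnd K n), LinearMap.trace K _ x = 0 := by
    rintro S _ ⟨x, -, rfl⟩
    exact trace_slToEnd x
  set Z := (bracketSpan U V).map (slToEnd K n) ⊔ K ∙ (1 : End K (Fin n → K)) with hZ
  -- Adjoining `1` to `[U, V]` makes the orthogonal space consist of traceless endomorphisms.
  set W := (trForm K (Fin n → K)).orthogonal Z with hW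
  have hWtr : ∀ w ∈ W, LinearMap.trace K _ w = 0 := by
    intro w hw
    have := hw 1 (Submodule.mem_sup_right (Submodule.mem_span_singleton_self _))
    simpa using this
  have key := two_mul_finrank_le' hnK (U.map (slToEnd K n)) (V.map (slToEnd K n)) W
    (htr U) (htr V) hWtr (by
      rintro _ ⟨u, hu, rfl⟩ _ ⟨v, hv, rfl⟩ w hw
      rw [← slToEnd_lie, LinearMap.trace_mul_comm]
      exact hw _ (Submodule.mem_sup_left (Submodule.mem_map_of_mem
        (Submodule.subset_span ⟨u, hu, v, hv, rfl⟩))))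
  have hWfr : finrank K W = n ^ 2 - (finrank K (bracketSpan U V) + 1) := by
    rw [hW, LinearMap.BilinForm.finrank_orthogonal trForm_nondegenerate, hZ,
      finrank_sup_span_one (by simpa using hnK) _ (htr _), finrank_end_eq, finrank_fin_fun, hfr]
  rw [hfr, hfr] at key
  have hsl := finrank_sl (K := K) (n := n) (by omega)
  have hUle := Submodule.finrank_le U
  have hVle := Submodule.finrank_le V
  unfold codim
  omega
end

section
/- Let K be a field of prime characteristic p, and let n ≥ 3 be an integer with p dividing n. Then for any two K-subspaces U and V of sl_n(K) one has (2n−3)·codim [U,V] ≤ (3n−4)·(codim U + codim V), where codimensions are taken inside sl_n(K) (of dimension n²−1). -/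
namespace BracketCodim

variable {K : Type*} [Field K] {n : ℕ}

local notation "Mat" => Matrix (Fin n) (Fin n) K

/-! ### A grading of the matrix algebra -/

/-- The weight of the matrix unit `E i j`; powers of two make the weights of distinct
off-diagonal positions distinct. -/
def wt (i j : Fin n) : ℤ := 2 ^ (i : ℕ) - 2 ^ (j : ℕ)

lemma wt_add (i k j : Fin n) : wt i k + wt k j = wt i j := by
  unfold wt; ring

lemma wt_self (i : Fin n) : wt i i = 0 := by simp [wt]

lemma pow_sum_eq {a b c d : ℕ} (hab : a ≤ b) (hcd : c ≤ d)
    (h : 2 ^ a + 2 ^ b = 2 ^ c + 2 ^ d) : a = c ∧ b = d := by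
  have key : ∀ {a b c d : ℕ}, a ≤ b → 2 ^ a + 2 ^ b = 2 ^ c + 2 ^ d → ¬ b < d := by
    intro a b c d hab h hlt
    have h1 : 2 ^ a ≤ 2 ^ b := Nat.pow_le_pow_right (by norm_num) hab
    have h2 : 2 ^ (b + 1) ≤ 2 ^ d := Nat.pow_le_pow_right (by norm_num) hlt
    have h3 : 0 < 2 ^ c := by positivity
    rw [pow_succ] at h2
    omega
  have hbd : b = d := le_antisymm (not_lt.1 (key hcd h.symm)) (not_lt.1 (key hab h))
  subst hbd
  exact ⟨Nat.pow_right_injective le_rfl (by simpa using h), rfl⟩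

lemma wt_inj {i j k l : Fin n} (hij : i ≠ j) (h : wt i j = wt k l) : i = k ∧ j = l := by
  have h' : 2 ^ (i : ℕ) + 2 ^ (l : ℕ) = 2 ^ (k : ℕ) + 2 ^ (j : ℕ) := by
    unfold wt at h
    zify
    linarith
  have hij' : (i : ℕ) ≠ j := fun e => hij (Fin.ext e)
  suffices (i : ℕ) = k ∧ (j : ℕ) = l from ⟨Fin.ext this.1, Fin.ext this.2⟩
  rcases le_total (i : ℕ) l with h1 | h1 <;> rcases le_total (k : ℕ) j with h2 | h2
  · have := pow_sum_eq h1 h2 h'; omega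
  · have := pow_sum_eq h1 h2 (by omega); omega
  · have := pow_sum_eq h1 h2 (by omega); omega
  · have := pow_sum_eq h1 h2 (by omega); omega

lemma wt_ne_zero {i j : Fin n} (hij : i ≠ j) : wt i j ≠ 0 := by
  intro h
  have := wt_inj hij (h.trans (wt_self i).symm)
  exact hij this.2.symm

lemma wt_lt (i j : Fin n) : wt i j < 2 ^ n := by
  have h1 : (2 : ℤ) ^ (i : ℕ) < 2 ^ n := pow_lt_pow_right₀ (by norm_num) i.2
  have h2 : (0 : ℤ) < 2 ^ (j : ℕ) := by positivity
  unfold wt; linarith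

lemma neg_lt_wt (i j : Fin n) : -2 ^ n < wt i j := by
  have := wt_lt j i
  unfold wt at *; linarith

/-- The matrices supported in weights at most `w`. -/
def filt (K : Type*) [Field K] (n : ℕ) (w : ℤ) : Submodule K (Matrix (Fin n) (Fin n) K) where
  carrier := {m | ∀ i j, w < wt i j → m i j = 0}
  add_mem' := fun ha hb i j h => by simp [ha i j h, hb i j h]
  zero_mem' := fun i j _ => rfl
  smul_mem' := fun c x hx i j h => by simp [hx i j h]

lemma mem_filt {w : ℤ} {m : Mat} : m ∈ filt K n w ↔ ∀ i j, w < wt i j → m i j = 0 := Iff.rfl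

/-- The projection of a matrix to its component of weight `w`. -/
def proj (K : Type*) [Field K] (n : ℕ) (w : ℤ) :
    Matrix (Fin n) (Fin n) K →ₗ[K] Matrix (Fin n) (Fin n) K where
  toFun m := Matrix.of fun i j => if wt i j = w then m i j else 0
  map_add' := fun a b => by ext i j; by_cases h : wt i j = w <;> simp [h]
  map_smul' := fun c a => by ext i j; by_cases h : wt i j = w <;> simp [h]

lemma proj_apply (w : ℤ) (m : Mat) (i j : Fin n) :
    proj K n w m i j = if wt i j = w then m i j else 0 := rfl

/-- The weight `w` component of the associated graded space of `U`: the weight `w` parts of the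
elements of `U` without components of larger weight. -/
def gr (w : ℤ) (U : Submodule K Mat) : Submodule K Mat := (U ⊓ filt K n w).map (proj K n w)

lemma mem_gr_apply {w : ℤ} {U : Submodule K Mat} {m : Mat} (hm : m ∈ gr w U) {i j : Fin n}
    (h : wt i j ≠ w) : m i j = 0 := by
  obtain ⟨u, -, rfl⟩ := hm
  simp [proj_apply, h]

lemma finrank_step (U : Submodule K Mat) (w : ℤ) :
    Module.finrank K ↥(U ⊓ filt K n (w + 1)) =
      Module.finrank K ↥(U ⊓ filt K n w) + Module.finrank K ↥(gr (w + 1) U) := by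
  have h := LinearMap.finrank_range_add_finrank_ker
    ((proj K n (w + 1)).domRestrict (U ⊓ filt K n (w + 1)))
  rw [LinearMap.range_domRestrict] at h
  have hk : (LinearMap.ker ((proj K n (w + 1)).domRestrict (U ⊓ filt K n (w + 1)))).map
      (U ⊓ filt K n (w + 1)).subtype = U ⊓ filt K n w := by
    ext m
    constructor
    · rintro ⟨⟨x, hxU, hxF⟩, hx, rfl⟩
      refine ⟨hxU, fun i j hij => ?_⟩
      rcases (Int.add_one_le_iff.2 hij).eq_or_lt with h1 | h1
      · have h2 : proj K n (w + 1) x = 0 := hx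
        have h3 := congrFun (congrFun h2 i) j
        rw [proj_apply, if_pos h1.symm] at h3
        simpa using h3
      · exact hxF i j h1
    · rintro ⟨hU, hF⟩
      refine ⟨⟨m, hU, fun i j h => hF i j (by omega)⟩, ?_, rfl⟩
      rw [SetLike.mem_coe, LinearMap.mem_ker]
      ext i j
      simp only [LinearMap.domRestrict_apply, proj_apply, Matrix.zero_apply]
      split_ifs with h1
      · exact hF i j (by omega)
      · rfl
  have hk' := LinearEquiv.finrank_eq (Submodule.equivMapOfInjective _
    (U ⊓ filt K n (w + 1)).injective_subtype
    (LinearMap.ker ((proj K n (w + 1)).domRestrict (U ⊓ filt K n (w + 1)))))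
  rw [hk] at hk'
  unfold gr
  omega

lemma finrank_eq_sum (U : Submodule K Mat) :
    Module.finrank K U = ∑ w ∈ Finset.Ioc (-2 ^ n : ℤ) (2 ^ n), Module.finrank K ↥(gr w U) := by
  have key : ∀ w : ℤ, -2 ^ n ≤ w → Module.finrank K ↥(U ⊓ filt K n w) =
      ∑ v ∈ Finset.Ioc (-2 ^ n : ℤ) w, Module.finrank K ↥(gr v U) := by
    intro w hw
    induction w, hw using Int.leInduction with
    | base =>
      have : filt K n (-2 ^ n) = ⊥ := by
        rw [eq_bot_iff]
        intro m hm
        rw [Submodule.mem_bot]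
        ext i j
        exact hm i j (neg_lt_wt i j)
      simp [this]
    | succ w hw ih =>
      have : Finset.Ioc (-2 ^ n : ℤ) (w + 1) = insert (w + 1) (Finset.Ioc (-2 ^ n : ℤ) w) := by
        ext x; simp only [Finset.mem_Ioc, Finset.mem_insert]; omega
      rw [finrank_step, this, Finset.sum_insert (by simp), ih, add_comm]
  have hpos : (0 : ℤ) < 2 ^ n := by positivity
  rw [← key (2 ^ n) (by omega)]
  have : filt K n (2 ^ n) = ⊤ := by
    rw [eq_top_iff]
    intro m _ i j h
    exact absurd (wt_lt i j) (by omega)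
  rw [this, inf_top_eq]

lemma gr_eq_bot {U : Submodule K Mat} {w : ℤ} (h : ∀ i j : Fin n, wt i j ≠ w) : gr w U = ⊥ := by
  rw [eq_bot_iff]
  intro m hm
  rw [Submodule.mem_bot]
  ext i j
  exact mem_gr_apply hm (h i j)

/-- The defect of `U` at the position `(i, j)`: it is `1` when `i ≠ j` and `E i j` is missing from
the associated graded space of `U`, and `0` otherwise. -/
noncomputable def defect (U : Submodule K Mat) (i j : Fin n) : ℕ :=
  if i = j then 0 else 1 - Module.finrank K ↥(gr (wt i j) U)

lemma defect_self (U : Submodule K Mat) (i : Fin n) : defect U i i = 0 := by simp [defect]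

lemma defect_le_one (U : Submodule K Mat) (i j : Fin n) : defect U i j ≤ 1 := by
  unfold defect; split_ifs <;> omega

lemma gr_le_span (U : Submodule K Mat) {i j : Fin n} (hij : i ≠ j) :
    gr (wt i j) U ≤ Submodule.span K {Matrix.single i j (1 : K)} := by
  intro m hm
  rw [Submodule.mem_span_singleton]
  refine ⟨m i j, ?_⟩
  ext k l
  by_cases h : i = k ∧ j = l
  · obtain ⟨rfl, rfl⟩ := h
    simp
  · have h' : wt k l ≠ wt i j := fun e => h (wt_inj hij e.symm)
    rw [mem_gr_apply hm h']
    simp [h]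

lemma finrank_gr_le_one (U : Submodule K Mat) {i j : Fin n} (hij : i ≠ j) :
    Module.finrank K ↥(gr (wt i j) U) ≤ 1 :=
  (Submodule.finrank_mono (gr_le_span U hij)).trans
    ((finrank_span_le_card _).trans (by simp))

lemma defect_eq_zero_iff (U : Submodule K Mat) {i j : Fin n} (hij : i ≠ j) :
    defect U i j = 0 ↔ Matrix.single i j (1 : K) ∈ gr (wt i j) U := by
  have h1 : Module.finrank K ↥(Submodule.span K {Matrix.single i j (1 : K)}) = 1 := by
    apply finrank_span_singleton
    intro h
    have := congrFun (congrFun h i) j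
    simp at this
  have h2 := finrank_gr_le_one U hij
  simp only [defect, hij, if_false]
  constructor
  · intro h
    rw [Submodule.eq_of_le_of_finrank_eq (gr_le_span U hij) (by omega)]
    exact Submodule.mem_span_singleton_self _
  · intro h
    have := Submodule.finrank_mono (R := K)
      ((Submodule.span_singleton_le_iff_mem _ _).2 h)
    omega

/-- Summing the dimensions of the graded pieces: `dim U` differs from `n (n - 1) + dim gr₀ U` by
the number of missing off-diagonal positions. -/
lemma finrank_add_defect (U : Submodule K Mat) :
    Module.finrank K U + ∑ i, ∑ j, defect U i j + n =
      n * n + Module.finrank K ↥(gr 0 U) := by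
  have hpos : (0 : ℤ) < 2 ^ n := by positivity
  have h1 : ∑ w ∈ (Finset.Ioc (-2 ^ n : ℤ) (2 ^ n)).erase 0, Module.finrank K ↥(gr w U) =
      ∑ q ∈ (Finset.univ : Finset (Fin n)).offDiag, Module.finrank K ↥(gr (wt q.1 q.2) U) := by
    rw [← Finset.sum_image (s := (Finset.univ : Finset (Fin n)).offDiag)
      (g := fun q => wt q.1 q.2) (f := fun w => Module.finrank K ↥(gr w U))]
    · symm
      apply Finset.sum_subset
      · intro w hw
        obtain ⟨⟨i, j⟩, hq, rfl⟩ := Finset.mem_image.1 hw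
        have hij : i ≠ j := by simpa using hq
        have ha := wt_lt i j
        have hb := neg_lt_wt i j
        simp only [Finset.mem_erase, Finset.mem_Ioc]
        exact ⟨wt_ne_zero hij, hb, ha.le⟩
      · intro w hw hw'
        rw [gr_eq_bot, finrank_bot]
        rintro i j rfl
        have hne : i ≠ j := by
          rintro rfl
          exact (Finset.mem_erase.1 hw).1 (wt_self i)
        exact hw' (Finset.mem_image.2 ⟨(i, j), by simpa using hne, rfl⟩)
    · rintro ⟨i, j⟩ hq ⟨k, l⟩ - h
      have hij : i ≠ j := by simpa using hq
      have := wt_inj hij h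
      exact Prod.ext this.1 this.2
  have h2 : ∑ i, ∑ j, defect U i j =
      ∑ q ∈ (Finset.univ : Finset (Fin n)).offDiag, defect U q.1 q.2 := by
    rw [← Fintype.sum_prod_type' (f := fun i j => defect U i j)]
    symm
    apply Finset.sum_subset (Finset.subset_univ _)
    rintro ⟨i, j⟩ - h
    have : i = j := by simpa using h
    subst this
    exact defect_self U _
  have h3 : ∑ q ∈ (Finset.univ : Finset (Fin n)).offDiag, Module.finrank K ↥(gr (wt q.1 q.2) U) +
      ∑ q ∈ (Finset.univ : Finset (Fin n)).offDiag, defect U q.1 q.2 = n * n - n := by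
    rw [← Finset.sum_add_distrib, Finset.sum_congr rfl (g := fun _ => 1)]
    · simp [Finset.offDiag_card]
    · rintro ⟨i, j⟩ hq
      have hij : i ≠ j := by simpa using hq
      have := finrank_gr_le_one U hij
      simp only [defect, hij, if_false]
      omega
  have h4 := Finset.add_sum_erase (Finset.Ioc (-2 ^ n : ℤ) (2 ^ n))
    (fun w => Module.finrank K ↥(gr w U)) (a := 0) (by simp)
  rw [finrank_eq_sum U]
  have : n ≤ n * n := Nat.le_mul_self n
  omega

/-! ### Brackets in the associated graded space -/

lemma proj_mul {w w' : ℤ} {a b : Mat} (ha : a ∈ filt K n w) (hb : b ∈ filt K n w') :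
    proj K n (w + w') (a * b) = proj K n w a * proj K n w' b := by
  ext i j
  simp only [proj_apply, Matrix.mul_apply]
  split_ifs with h
  · refine Finset.sum_congr rfl fun k _ => ?_
    have hk := wt_add i k j
    by_cases h1 : wt i k = w
    · rw [if_pos h1, if_pos (by omega)]
    · rw [if_neg h1, zero_mul]
      rcases lt_or_gt_of_ne h1 with h2 | h2
      · rw [hb k j (by omega), mul_zero]
      · rw [ha i k h2, zero_mul]
  · symm
    refine Finset.sum_eq_zero fun k _ => ?_
    have hk := wt_add i k j
    by_cases h1 : wt i k = w
    · rw [if_neg (by omega : ¬ wt k j = w'), mul_zero]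
    · rw [if_neg h1, zero_mul]

lemma mul_mem_filt {w w' : ℤ} {a b : Mat} (ha : a ∈ filt K n w) (hb : b ∈ filt K n w') :
    a * b ∈ filt K n (w + w') := by
  intro i j h
  rw [Matrix.mul_apply]
  refine Finset.sum_eq_zero fun k _ => ?_
  have hk := wt_add i k j
  by_cases h1 : w < wt i k
  · rw [ha i k h1, zero_mul]
  · rw [hb k j (by omega), mul_zero]

/-- Brackets of leading parts are leading parts of brackets. -/
lemma bracket_mem_gr {U V B : Submodule K Mat}
    (hB : ∀ u ∈ U, ∀ v ∈ V, u * v - v * u ∈ B) {w w' : ℤ} {x y : Mat}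
    (hx : x ∈ gr w U) (hy : y ∈ gr w' V) : x * y - y * x ∈ gr (w + w') B := by
  obtain ⟨u, ⟨huU, huF⟩, rfl⟩ := hx
  obtain ⟨v, ⟨hvV, hvF⟩, rfl⟩ := hy
  refine ⟨u * v - v * u, ⟨hB u huU v hvV, ?_⟩, ?_⟩
  · refine Submodule.sub_mem _ (mul_mem_filt huF hvF) ?_
    rw [add_comm]
    exact mul_mem_filt hvF huF
  · rw [map_sub, proj_mul huF hvF, add_comm w w', proj_mul hvF huF]

lemma defect_bracket_le {U V B : Submodule K Mat}
    (hB : ∀ u ∈ U, ∀ v ∈ V, u * v - v * u ∈ B) {i j k : Fin n}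
    (hij : i ≠ j) (hik : i ≠ k) (hkj : k ≠ j) :
    defect B i j ≤ defect U i k + defect V k j := by
  by_contra hcon
  have hu : defect U i k = 0 := by have := defect_le_one B i j; omega
  have hv : defect V k j = 0 := by have := defect_le_one B i j; omega
  have hb : defect B i j ≠ 0 := by omega
  rw [defect_eq_zero_iff _ hik] at hu
  rw [defect_eq_zero_iff _ hkj] at hv
  apply hb
  rw [defect_eq_zero_iff _ hij, ← wt_add i k j]
  have := bracket_mem_gr hB hu hv
  simpa [Matrix.single_mul_single_of_ne, hij.symm] using this

lemma diag_mem_of_defect {U V B : Submodule K Mat}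
    (hB : ∀ u ∈ U, ∀ v ∈ V, u * v - v * u ∈ B) {i j : Fin n} (hij : i ≠ j)
    (h : defect U i j + defect V j i = 0) :
    Matrix.single i i (1 : K) - Matrix.single j j 1 ∈ gr 0 B := by
  have hu : defect U i j = 0 := by omega
  have hv : defect V j i = 0 := by omega
  rw [defect_eq_zero_iff _ hij] at hu
  rw [defect_eq_zero_iff _ hij.symm] at hv
  have := bracket_mem_gr hB hu hv
  rw [wt_add, wt_self] at this
  simpa using this

/-- If `E i j` occurs for `U` but not for the bracket, the diagonal part of `V` is killed by the
root of `E i j`. -/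
lemma diag_eq_of_defect {U V B : Submodule K Mat}
    (hB : ∀ u ∈ U, ∀ v ∈ V, u * v - v * u ∈ B) {i j : Fin n} (hij : i ≠ j)
    (hU : defect U i j = 0) (hb : defect B i j ≠ 0) {d : Mat} (hd : d ∈ gr 0 V) :
    d i i = d j j := by
  by_contra hne
  apply hb
  rw [defect_eq_zero_iff _ hij] at hU ⊢
  have h := bracket_mem_gr hB hU hd
  rw [add_zero] at h
  have hdiag : ∀ k l, k ≠ l → d k l = 0 := fun k l hkl => mem_gr_apply hd (wt_ne_zero hkl)
  have heq : Matrix.single i j (1 : K) * d - d * Matrix.single i j (1 : K) =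
      (d j j - d i i) • Matrix.single i j (1 : K) := by
    obtain ⟨c, hc⟩ := Submodule.mem_span_singleton.1 (gr_le_span B hij h)
    rw [← hc]
    have := congrFun (congrFun hc i) j
    simp at this
    rw [this]
  rw [heq] at h
  exact (Submodule.smul_mem_iff _ (sub_ne_zero.2 (Ne.symm hne))).1 h

/-! ### Diagonal parts of traceless spaces -/

/-- The traceless diagonal matrices. -/
def tdiag (K : Type*) [Field K] (n : ℕ) : Submodule K (Matrix (Fin n) (Fin n) K) :=
  (LinearMap.range (Matrix.diagonalLinearMap (Fin n) K K)) ⊓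
    LinearMap.ker (Matrix.traceLinearMap (Fin n) K K)

lemma finrank_diag :
    Module.finrank K ↥(LinearMap.range (Matrix.diagonalLinearMap (Fin n) K K)) = n := by
  rw [LinearMap.finrank_range_of_inj]
  · simp
  · intro a b h
    exact Matrix.diagonal_injective h

lemma finrank_tdiag (hn : 0 < n) : Module.finrank K ↥(tdiag K n) + 1 ≤ n := by
  have hlt : tdiag K n < LinearMap.range (Matrix.diagonalLinearMap (Fin n) K K) := by
    refine lt_of_le_of_ne inf_le_left fun h => ?_
    have hm : Matrix.diagonal (Pi.single (⟨0, hn⟩ : Fin n) (1 : K)) ∈ tdiag K n := by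
      rw [h]; exact ⟨_, rfl⟩
    have := hm.2
    simp [Matrix.trace_diagonal] at this
  have := Submodule.finrank_lt_finrank_of_lt hlt
  rw [finrank_diag] at this
  omega

lemma gr_zero_le_tdiag {U : Submodule K Mat} (hU : ∀ u ∈ U, u.trace = 0) :
    gr 0 U ≤ tdiag K n := by
  intro d hd
  refine ⟨⟨d.diag, ?_⟩, ?_⟩
  · ext i j
    by_cases h : i = j
    · subst h; simp [Matrix.diagonalLinearMap]
    · rw [mem_gr_apply hd (wt_ne_zero h)]
      simp [Matrix.diagonalLinearMap, h]
  · obtain ⟨u, hu, rfl⟩ := hd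
    have := hU u hu.1
    simpa [Matrix.trace, proj_apply, wt_self] using this


lemma finrank_gr_zero_of_mem (hn : 0 < n) {B : Submodule K Mat}
    (h : ∀ i j : Fin n, i ≠ j → Matrix.single i i (1 : K) - Matrix.single j j 1 ∈ gr 0 B) :
    n ≤ Module.finrank K ↥(gr 0 B) + 1 := by
  set o : Fin n := ⟨0, hn⟩
  have hle : LinearMap.range (Matrix.diagonalLinearMap (Fin n) K K) ≤
      gr 0 B ⊔ Submodule.span K {Matrix.single o o (1 : K)} := by
    rintro _ ⟨d, rfl⟩
    have hd : Matrix.diagonalLinearMap (Fin n) K K d =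
        ∑ i, d i • Matrix.single i i (1 : K) := by
      ext k l
      rw [Matrix.sum_apply]
      by_cases hkl : k = l
      · subst hkl
        simp [Matrix.diagonalLinearMap, Matrix.single_apply]
      · have : ∀ i, ¬ (i = k ∧ i = l) := fun i hi => hkl (hi.1.symm.trans hi.2)
        simp [Matrix.diagonalLinearMap, hkl, this]
    rw [hd]
    refine Submodule.sum_mem _ fun i _ => Submodule.smul_mem _ _ ?_
    have ho : Matrix.single o o (1 : K) ∈
        gr 0 B ⊔ Submodule.span K {Matrix.single o o (1 : K)} :=
      Submodule.mem_sup_right (Submodule.mem_span_singleton_self _)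
    by_cases hi : i = o
    · rw [hi]; exact ho
    · have := Submodule.add_mem _ (Submodule.mem_sup_left
        (T := Submodule.span K {Matrix.single o o (1 : K)}) (h i o hi)) ho
      simpa using this
  have h1 := Submodule.finrank_mono hle
  rw [finrank_diag] at h1
  have h2 := Submodule.finrank_add_le_finrank_add_finrank (gr 0 B)
    (Submodule.span K {Matrix.single o o (1 : K)})
  have h3 : Module.finrank K ↥(Submodule.span K {Matrix.single o o (1 : K)}) ≤ 1 :=
    (finrank_span_le_card _).trans (by simp)
  omega

/-! ### Counting missing positions -/

lemma row_col_bound {γ δ : Fin n → Fin n → ℕ}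
    (h : ∀ i j k, i ≠ j → i ≠ k → k ≠ j → 2 * δ i j ≤ γ i k + γ k j)
    {i j : Fin n} (hij : i ≠ j) :
    2 * n * δ i j + 2 * γ i j ≤ ∑ k, γ i k + ∑ k, γ k j + 4 * δ i j := by
  have hk : ∀ k, 2 * δ i j + ((if k = i then γ i j else 0) + if k = j then γ i j else 0) ≤
      γ i k + γ k j + ((if k = i then 2 * δ i j else 0) + if k = j then 2 * δ i j else 0) := by
    intro k
    by_cases h1 : k = i
    · subst h1
      simp [hij]
      omega
    · by_cases h2 : k = j
      · subst h2
        simp [hij.symm]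
        omega
      · simpa [h1, h2] using h i j k hij (Ne.symm h1) h2
  have := Finset.sum_le_sum fun k (_ : k ∈ Finset.univ) => hk k
  simp only [Finset.sum_add_distrib, Finset.sum_ite_eq', Finset.mem_univ, if_true,
    Finset.sum_const, Finset.card_univ, Fintype.card_fin, smul_eq_mul] at this
  linarith

/-- Double counting over triples `i, j, k` of distinct indices: each `δ i j` is charged twice to
`γ i k + γ k j` for each of the `n - 2` values of `k`, and each off-diagonal entry of `γ` is used
in `2 (n - 2)` triples. Here `δ` is the defect of the bracket, and `γ` the sum of the defects of
the two factors. -/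
lemma sum_le_sum_of_triple (hn : 3 ≤ n) {γ δ : Fin n → Fin n → ℕ} (hγ : ∀ i, γ i i = 0)
    (hδ : ∀ i, δ i i = 0)
    (h : ∀ i j k, i ≠ j → i ≠ k → k ≠ j → 2 * δ i j ≤ γ i k + γ k j) :
    ∑ i, ∑ j, δ i j ≤ ∑ i, ∑ j, γ i j := by
  have key : ∀ i j, 2 * n * δ i j + 2 * γ i j +
      (if i = j then ∑ k, γ i k + ∑ k, γ k i else 0) ≤
      ∑ k, γ i k + ∑ k, γ k j + 4 * δ i j := by
    intro i j
    by_cases hij : i = j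
    · subst hij
      simp [hγ, hδ]
    · simpa [hij] using row_col_bound h hij
  have h1 := Finset.sum_le_sum fun i (_ : i ∈ Finset.univ) =>
    Finset.sum_le_sum fun j (_ : j ∈ Finset.univ) => key i j
  simp only [Finset.sum_add_distrib, Finset.sum_ite_eq, Finset.mem_univ, if_true,
    Finset.sum_const, Finset.card_univ, Fintype.card_fin, smul_eq_mul, ← Finset.mul_sum] at h1
  have h2 : ∑ i, ∑ k, γ k i = ∑ i, ∑ j, γ i j := Finset.sum_comm
  rw [h2] at h1
  set D := ∑ i, ∑ j, δ i j
  set G := ∑ i, ∑ j, γ i j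
  obtain ⟨m, rfl⟩ : ∃ m, n = m + 3 := ⟨n - 3, by omega⟩
  by_contra hlt
  push Not at hlt
  nlinarith

lemma row_add_col_le (γ : Fin n → Fin n → ℕ) (i j : Fin n) :
    ∑ k, γ i k + ∑ k, γ k j ≤ ∑ a, ∑ b, γ a b + γ i j := by
  rw [← Finset.add_sum_erase _ (fun a => ∑ b, γ a b) (Finset.mem_univ i),
    ← Finset.add_sum_erase _ (fun a => γ a j) (Finset.mem_univ i)]
  have : ∑ a ∈ Finset.univ.erase i, γ a j ≤ ∑ a ∈ Finset.univ.erase i, ∑ b, γ a b :=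
    Finset.sum_le_sum fun a _ => Finset.single_le_sum (f := fun b => γ a b)
      (fun _ _ => Nat.zero_le _) (Finset.mem_univ j)
  omega

/-- If `i` and `j` are joined neither directly nor through a third index, then each of the
`n - 1` edge-disjoint paths of length at most two contains a pair of defect at least two. -/
lemma cut_bound {γ : Fin n → Fin n → ℕ} {i j : Fin n} (hij : i ≠ j)
    (h0 : 2 ≤ γ i j + γ j i)
    (h : ∀ k, k ≠ i → k ≠ j → 2 ≤ γ i k + γ k i ∨ 2 ≤ γ j k + γ k j) :
    2 * n ≤ ∑ a, ∑ b, γ a b + 2 := by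
  set S := (Finset.univ.erase i).erase j with hS
  have hji : j ∈ Finset.univ.erase i := by simp [hij.symm]
  have hs : ∀ f : Fin n → ℕ, ∑ k, f k = f i + (f j + ∑ k ∈ S, f k) := fun f => by
    rw [hS, Finset.add_sum_erase _ f hji, Finset.add_sum_erase _ f (Finset.mem_univ i)]
  have hcard : n = S.card + 2 := by
    have := hs fun _ => 1
    simp at this
    omega
  have h1 : ∑ k ∈ S, 2 ≤ ∑ k ∈ S, (γ i k + γ j k + ∑ b, γ k b) := by
    refine Finset.sum_le_sum fun k hk => ?_
    have h2 := h k (by simp [hS] at hk; exact hk.2) (by simp [hS] at hk; exact hk.1)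
    have h3 := hs fun b => γ k b
    omega
  simp only [Finset.sum_const, smul_eq_mul, Finset.sum_add_distrib] at h1
  have h4 := hs fun a => ∑ b, γ a b
  have h5 := hs fun b => γ i b
  have h6 := hs fun b => γ j b
  omega

/-! ### The two estimates for matrix subspaces -/

/-- The two bounds on the codimension of the bracket, for spaces of traceless matrices. -/
lemma main_bounds (hn : 3 ≤ n) {U V B : Submodule K Mat}
    (hU : ∀ u ∈ U, u.trace = 0) (hV : ∀ v ∈ V, v.trace = 0)
    (hB : ∀ u ∈ U, ∀ v ∈ V, u * v - v * u ∈ B) :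
    n * n - 1 - Module.finrank K B ≤
        n - 1 + ((n * n - 1 - Module.finrank K U) + (n * n - 1 - Module.finrank K V)) ∧
      (n * n - 1 - Module.finrank K B = 0 ∨
        2 * n - 3 ≤ (n * n - 1 - Module.finrank K U) + (n * n - 1 - Module.finrank K V)) := by
  have hB' : ∀ v ∈ V, ∀ u ∈ U, v * u - u * v ∈ B := fun v hv u hu => by
    simpa using B.neg_mem (hB u hu v hv)
  set γ : Fin n → Fin n → ℕ := fun i j => defect U i j + defect V i j with hγ
  have hγ0 : ∀ i, γ i i = 0 := fun i => by simp [hγ, defect_self]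
  have htri : ∀ i j k, i ≠ j → i ≠ k → k ≠ j → 2 * defect B i j ≤ γ i k + γ k j := by
    intro i j k hij hik hkj
    have h1 := defect_bracket_le hB hij hik hkj
    have h2 := defect_bracket_le hB' hij hik hkj
    simp only [hγ]
    omega
  have hsum := sum_le_sum_of_triple hn hγ0 (defect_self B) htri
  have hΓ : ∑ i, ∑ j, γ i j = ∑ i, ∑ j, defect U i j + ∑ i, ∑ j, defect V i j := by
    simp [hγ, Finset.sum_add_distrib]
  have eU := finrank_add_defect U
  have eV := finrank_add_defect V
  have eB := finrank_add_defect B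
  have htd := finrank_tdiag (K := K) (n := n) (by omega)
  have lU := Submodule.finrank_mono (gr_zero_le_tdiag hU)
  have lV := Submodule.finrank_mono (gr_zero_le_tdiag hV)
  refine ⟨by omega, ?_⟩
  by_cases hD : ∃ i j, defect B i j ≠ 0
  · right
    obtain ⟨i, j, hd⟩ := hD
    have hij : i ≠ j := by
      rintro rfl
      exact hd (defect_self B i)
    have hd1 : defect B i j = 1 := by have := defect_le_one B i j; omega
    have h1 := row_col_bound htri hij
    have h2 := row_add_col_le γ i j
    rw [hd1] at h1
    by_cases hg : γ i j = 0
    · have hdu : defect U i j = 0 := by simp only [hγ] at hg; omega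
      have hlt : gr 0 V < tdiag K n := by
        refine lt_of_le_of_ne (gr_zero_le_tdiag hV) fun heq => ?_
        obtain ⟨k, hki, hkj⟩ : ∃ k : Fin n, k ≠ i ∧ k ≠ j := by
          have : ∃ k : Fin n, k ∉ ({i, j} : Finset (Fin n)) := by
            by_contra! hall
            have h3 := Finset.card_le_card (fun k _ => hall k : Finset.univ ⊆ {i, j})
            have h4 := Finset.card_le_two (a := i) (b := j)
            simp only [Finset.card_univ, Fintype.card_fin] at h3
            omega
          simpa using this
        have hm : Matrix.diagonal (Pi.single i (1 : K) - Pi.single k 1) ∈ tdiag K n := by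
          refine ⟨⟨_, rfl⟩, ?_⟩
          simp [Matrix.trace_diagonal]
        rw [← heq] at hm
        have := diag_eq_of_defect hB hij hdu hd hm
        simp [hij.symm, hki.symm, hkj.symm] at this
      have := Submodule.finrank_lt_finrank_of_lt hlt
      omega
    · omega
  · push Not at hD
    have hD0 : ∑ i, ∑ j, defect B i j = 0 := by simp [hD]
    by_cases hall : ∀ i j : Fin n, i ≠ j →
        Matrix.single i i (1 : K) - Matrix.single j j 1 ∈ gr 0 B
    · left
      have := finrank_gr_zero_of_mem (by omega) hall
      omega
    · right
      push Not at hall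
      obtain ⟨i, j, hij, hnot⟩ := hall
      have edge : ∀ a b : Fin n, a ≠ b →
          Matrix.single a a (1 : K) - Matrix.single b b 1 ∉ gr 0 B → 2 ≤ γ a b + γ b a := by
        intro a b hab hn'
        have h1 : defect U a b + defect V b a ≠ 0 := fun h => hn' (diag_mem_of_defect hB hab h)
        have h2 : defect V a b + defect U b a ≠ 0 := fun h => hn' (diag_mem_of_defect hB' hab h)
        simp only [hγ]
        omega
      have := cut_bound (γ := γ) hij (edge i j hij hnot) fun k hki hkj => by
        by_contra! hcon
        apply hnot
        have h1 : Matrix.single i i (1 : K) - Matrix.single k k 1 ∈ gr 0 B := by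
          by_contra hc
          have := edge i k hki.symm hc
          omega
        have h2 : Matrix.single j j (1 : K) - Matrix.single k k 1 ∈ gr 0 B := by
          by_contra hc
          have := edge j k hkj.symm hc
          omega
        simpa using Submodule.sub_mem _ h1 h2
      omega

lemma finrank_sl (hn : 0 < n) :
    Module.finrank K ↥(LieAlgebra.SpecialLinear.sl (Fin n) K) = n * n - 1 := by
  have h := LinearMap.finrank_range_add_finrank_ker (Matrix.traceLinearMap (Fin n) K K)
  have hr : LinearMap.range (Matrix.traceLinearMap (Fin n) K K) = ⊤ := by
    rw [LinearMap.range_eq_top]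
    intro c
    exact ⟨Matrix.single ⟨0, hn⟩ ⟨0, hn⟩ c, by simp⟩
  rw [hr, finrank_top, Module.finrank_self, Module.finrank_matrix] at h
  simp only [Fintype.card_fin, Module.finrank_self, mul_one] at h
  have h2 : Module.finrank K ↥(LieAlgebra.SpecialLinear.sl (Fin n) K) =
      Module.finrank K ↥(LinearMap.ker (Matrix.traceLinearMap (Fin n) K K)) := rfl
  omega

end BracketCodim

open BracketCodim in
theorem stmt3 (K : Type*) [Field K] (p n : ℕ) (hp : Nat.Prime p) [CharP K p]
    (hn : 3 ≤ n) (hpn : p ∣ n)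
    (U V : Submodule K ↥(LieAlgebra.SpecialLinear.sl (Fin n) K)) :
    (2 * n - 3) * codim K (bracketSpan U V) ≤
      (3 * n - 4) * (codim K U + codim K V) := by
  let ι : ↥(LieAlgebra.SpecialLinear.sl (Fin n) K) →ₗ[K] Matrix (Fin n) (Fin n) K :=
    { toFun := fun x => x.1
      map_add' := fun _ _ => rfl
      map_smul' := fun _ _ => rfl }
  have hinj : Function.Injective ι := Subtype.val_injective
  have hfr : ∀ W : Submodule K ↥(LieAlgebra.SpecialLinear.sl (Fin n) K),
      Module.finrank K ↥(W.map ι) = Module.finrank K W := fun W =>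
    (Submodule.equivMapOfInjective ι hinj W).finrank_eq.symm
  have htr : ∀ W : Submodule K ↥(LieAlgebra.SpecialLinear.sl (Fin n) K),
      ∀ u ∈ W.map ι, u.trace = 0 := by
    rintro W _ ⟨x, -, rfl⟩
    exact x.2
  have hB : ∀ u ∈ U.map ι, ∀ v ∈ V.map ι, u * v - v * u ∈ (bracketSpan U V).map ι := by
    rintro _ ⟨x, hx, rfl⟩ _ ⟨y, hy, rfl⟩
    exact ⟨⁅x, y⁆, Submodule.subset_span ⟨x, hx, y, hy, rfl⟩, rfl⟩
  have h := main_bounds hn (htr U) (htr V) hB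
  rw [hfr, hfr, hfr] at h
  unfold codim
  rw [finrank_sl (by omega)]
  set c := n * n - 1 - Module.finrank K ↥(bracketSpan U V)
  set s := (n * n - 1 - Module.finrank K U) + (n * n - 1 - Module.finrank K V)
  obtain ⟨h1, h2 | h2⟩ := h
  · rw [h2]; simp
  · obtain ⟨m, rfl⟩ : ∃ m, n = m + 3 := ⟨n - 3, by omega⟩
    have e1 : 2 * (m + 3) - 3 = 2 * m + 3 := by omega
    have e2 : 3 * (m + 3) - 4 = 3 * m + 5 := by omega
    have e3 : m + 3 - 1 = m + 2 := by omega
    rw [e1] at h2 ⊢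
    rw [e2]
    rw [e3] at h1
    calc (2 * m + 3) * c ≤ (2 * m + 3) * (m + 2 + s) := Nat.mul_le_mul_left _ h1
      _ ≤ (3 * m + 5) * s := by nlinarith
end
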